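/- arXiv:0709.4332 — 4 statements merged into one kernel-verified Lean document; each statement's English description precedes it below -/
import Mathlib

section
/- Let 0 < ε < √2·log 2 and ε < δ < 1. Then min(0, g(δ,ε)) is the least value of f_δ on S_{δ,ε}: for every (a, a₋, a₊, θ) ∈ S_{δ,ε} one has f_δ(a, a₋, a₊, θ) ≥ min(0, g(δ,ε)), and this value is attained (indeed f_δ(a, a, a, 0) = 0 for any a ∈ [√(δ²−ε²), δ], and f_δ(√(δ²−ε²), δ, √(δ²−ε²), ε/√2) = g(δ,ε)). -/
open MeasureTheory Real
/-- The function `g(δ,ε)` whose root determines the sharp dyadic parameter `δ⁺(ε)`. -/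
noncomputable def g (δ ε : ℝ) : ℝ :=
  (1 - Real.sqrt (δ ^ 2 - ε ^ 2)) * Real.exp (Real.sqrt (δ ^ 2 - ε ^ 2)) *
      (2 - Real.exp (ε / Real.sqrt 2)) -
    (1 - δ) * Real.exp (δ - ε / Real.sqrt 2)

/-- The function `f_δ` of the four-variable extremal problem (its formula does
not depend on `δ`). -/
noncomputable def fδ (a am ap θ : ℝ) : ℝ :=
  2 * (1 - a) * Real.exp a - (1 - am) * Real.exp (am - θ) -
    (1 - ap) * Real.exp (ap + θ)

/-- The constraint set `S_{δ,ε}`. -/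
def Sset (δ ε : ℝ) : Set (ℝ × ℝ × ℝ × ℝ) :=
  {p | p.1 ∈ Set.Icc (Real.sqrt (δ ^ 2 - ε ^ 2)) δ ∧
       p.2.1 ∈ Set.Icc (Real.sqrt (δ ^ 2 - ε ^ 2)) δ ∧
       p.2.2.1 ∈ Set.Icc (Real.sqrt (δ ^ 2 - ε ^ 2)) δ ∧
       p.2.2.1 ≤ p.2.1 ∧ 0 ≤ p.2.2.2 ∧
       p.2.1 ^ 2 + p.2.2.1 ^ 2 = 2 * p.1 ^ 2 + 2 * p.2.2.2 ^ 2}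

/-!
Write `h t = (1 - t) e ^ t` and `s = √(δ ^ 2 - ε ^ 2)`. The function `u ↦ h √u` is concave, and its
tangent inequalities at `a + θ` and `a - θ`, weighted by `e ^ (-θ)` and `e ^ θ`, add up to `0 ≤ f`
as soon as `θ ≤ a + a₊`; tangency at a negative point `a - θ` is harmless because `|a - θ| ≤ a₊`.

If `a + a₊ ≤ θ`, then `f` does not increase while `a` and `a₋` are decreased with `a₊` and `θ`
fixed until `a = s`, nor while `a₊` and `θ` are then decreased with `a` and `a₋` fixed until
`a₊ = s`. On the remaining edge `a = a₊ = s` the function is quasiconcave in `θ`, hence bounded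
below by its values at the ends: `0` at `θ = 0` and `g δ ε` at `θ = ε / √2`.
-/

lemma quasiconcaveOn_of_hasDerivAt_single_crossing {D : Set ℝ} (hD : Convex ℝ D) {f f' : ℝ → ℝ}
    (hf : ContinuousOn f D) (hf' : ∀ x ∈ interior D, HasDerivAt f (f' x) x)
    (hsign : ∀ x ∈ interior D, ∀ y ∈ interior D, x ≤ y → 0 ≤ f' y → 0 ≤ f' x) :
    QuasiconcaveOn ℝ D f := by
  refine fun r => Set.OrdConnected.convex ⟨?_⟩
  rintro x ⟨hxD, hx⟩ y ⟨hyD, hy⟩ z ⟨hxz, hzy⟩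
  have hIcc : Set.Icc x y ⊆ D := hD.ordConnected.out hxD hyD
  refine ⟨hIcc ⟨hxz, hzy⟩, ?_⟩
  rcases hxz.eq_or_lt with rfl | hxz
  · exact hx
  rcases hzy.eq_or_lt with rfl | hzy
  · exact hy
  have hIoo : Set.Ioo x y ⊆ interior D := by
    simpa only [interior_Icc] using interior_mono hIcc
  have hz : z ∈ interior D := hIoo ⟨hxz, hzy⟩
  by_cases hf'z : 0 ≤ f' z
  · have hsub : interior (Set.Icc x z) ⊆ interior D :=
      interior_mono ((Set.Icc_subset_Icc_right hzy.le).trans hIcc)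
    have hmono : MonotoneOn f (Set.Icc x z) :=
      monotoneOn_of_hasDerivWithinAt_nonneg (convex_Icc x z)
        (hf.mono ((Set.Icc_subset_Icc_right hzy.le).trans hIcc))
        (fun t ht => (hf' t (hsub ht)).hasDerivWithinAt)
        fun t ht => hsign t (hsub ht) z hz (interior_subset ht).2 hf'z
    exact hx.trans (hmono (Set.left_mem_Icc.2 hxz.le) (Set.right_mem_Icc.2 hxz.le) hxz.le)
  · have hsub : interior (Set.Icc z y) ⊆ interior D :=
      interior_mono ((Set.Icc_subset_Icc_left hxz.le).trans hIcc)
    have hanti : AntitoneOn f (Set.Icc z y) :=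
      antitoneOn_of_hasDerivWithinAt_nonpos (convex_Icc z y)
        (hf.mono ((Set.Icc_subset_Icc_left hxz.le).trans hIcc))
        (fun t ht => (hf' t (hsub ht)).hasDerivWithinAt)
        fun t ht => le_of_not_ge fun h =>
          hf'z (hsign z hz t (hsub ht) (interior_subset ht).1 h)
    exact hy.trans (hanti (Set.left_mem_Icc.2 hzy.le) (Set.right_mem_Icc.2 hzy.le) hzy.le)

lemma exp_le_quadratic_of_nonpos {x : ℝ} (hx : x ≤ 0) : exp x ≤ 1 + x + x ^ 2 / 2 := by
  have hneg : 1 - x + x ^ 2 / 2 ≤ exp (-x) := by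
    simpa [← sub_eq_add_neg] using quadratic_le_exp_of_nonneg (neg_nonneg.2 hx)
  have hprod : (1 + x + x ^ 2 / 2) * (1 - x + x ^ 2 / 2) = 1 + x ^ 4 / 4 := by ring
  have hpos : 0 < 1 - x + x ^ 2 / 2 := by nlinarith
  have hone : exp x * exp (-x) = 1 := by rw [← exp_add, add_neg_cancel, exp_zero]
  refine le_of_mul_le_mul_right ?_ hpos
  calc exp x * (1 - x + x ^ 2 / 2) ≤ exp x * exp (-x) := by gcongr
    _ ≤ (1 + x + x ^ 2 / 2) * (1 - x + x ^ 2 / 2) := by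
      rw [hone, hprod]
      linarith [show 0 ≤ x ^ 4 by positivity]

lemma two_sub_mul_exp_le {x : ℝ} (hx : 0 ≤ x) : (2 - x) * exp x ≤ 2 + x := by
  rcases lt_or_ge x 2 with hx2 | hx2
  · have := exp_le_two_add_div_two_sub hx hx2
    rwa [le_div_iff₀' (by linarith)] at this
  · exact (mul_nonpos_of_nonpos_of_nonneg (by linarith) (exp_pos x).le).trans (by linarith)

lemma one_sub_mul_exp_sub_one_sub_id_le {x d : ℝ} (hx : 0 ≤ x) (hd : d ≤ 2 * x) :
    (1 - x) * (exp d - 1 - d) ≤ d ^ 2 / 2 := by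
  have hnonneg : 0 ≤ exp d - 1 - d := by linarith [add_one_le_exp d]
  rcases le_total d 0 with h | h
  · nlinarith [exp_le_quadratic_of_nonpos h]
  · calc (1 - x) * (exp d - 1 - d) ≤ (1 - d / 2) * (exp d - 1 - d) := by gcongr; linarith
      _ ≤ d ^ 2 / 2 := by linarith [two_sub_mul_exp_le h]

/-- The profile `h t = (1 - t) e ^ t` out of which `f_δ` is built:
`f_δ = 2 h(a) - e ^ (-θ) h(a₋) - e ^ θ h(a₊)`. -/
noncomputable def oneSubMulExp (t : ℝ) : ℝ := (1 - t) * exp t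

lemma fδ_eq_oneSubMulExp (a m p θ : ℝ) :
    fδ a m p θ =
      2 * oneSubMulExp a - oneSubMulExp m * exp (-θ) - oneSubMulExp p * exp θ := by
  rw [fδ, sub_eq_add_neg m θ, exp_add, exp_add]
  simp only [oneSubMulExp]
  ring

lemma hasDerivAt_oneSubMulExp (t : ℝ) : HasDerivAt oneSubMulExp (-t * exp t) t :=
  (((hasDerivAt_id' t).const_sub 1).mul (Real.hasDerivAt_exp t)).congr_deriv (by ring)

lemma hasDerivAt_oneSubMulExp_sqrt {w : ℝ → ℝ} {w' t : ℝ} (hw : HasDerivAt w w' t)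
    (ht : 0 < w t) :
    HasDerivAt (fun t => oneSubMulExp √(w t)) (-(exp √(w t) / 2 * w')) t := by
  refine ((hasDerivAt_oneSubMulExp √(w t)).comp t (hw.sqrt ht.ne')).congr_deriv ?_
  have : √(w t) ≠ 0 := (sqrt_pos.2 ht).ne'
  field_simp

lemma antitoneOn_oneSubMulExp : AntitoneOn oneSubMulExp (Set.Ici 0) := by
  refine antitoneOn_of_hasDerivWithinAt_nonpos (convex_Ici 0)
    (fun t _ => (hasDerivAt_oneSubMulExp t).continuousAt.continuousWithinAt)
    (fun t _ => (hasDerivAt_oneSubMulExp t).hasDerivWithinAt) fun t ht => ?_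
  rw [interior_Ici, Set.mem_Ioi] at ht
  exact mul_nonpos_of_nonpos_of_nonneg (by linarith) (exp_pos t).le

lemma monotoneOn_oneSubMulExp : MonotoneOn oneSubMulExp (Set.Iic 0) := by
  refine monotoneOn_of_hasDerivWithinAt_nonneg (convex_Iic 0)
    (fun t _ => (hasDerivAt_oneSubMulExp t).continuousAt.continuousWithinAt)
    (fun t _ => (hasDerivAt_oneSubMulExp t).hasDerivWithinAt) fun t ht => ?_
  rw [interior_Iic, Set.mem_Iio] at ht
  exact mul_nonneg (by linarith) (exp_pos t).le

-- The right-hand side is the tangent at `y ^ 2` to `u ↦ oneSubMulExp √u`, continued to `y < 0`.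
lemma oneSubMulExp_le_tangent {x y : ℝ} (hx : 0 ≤ x) (hxy : -x ≤ y) :
    oneSubMulExp x ≤ exp y * (1 - y - (x ^ 2 - y ^ 2) / 2) := by
  have hexp : exp x = exp y * exp (x - y) := by rw [← exp_add, add_sub_cancel]
  have hkey := one_sub_mul_exp_sub_one_sub_id_le hx (d := x - y) (by linarith)
  calc oneSubMulExp x = exp y * ((1 - x) * exp (x - y)) := by rw [oneSubMulExp, hexp]; ring
    _ ≤ exp y * (1 - y - (x ^ 2 - y ^ 2) / 2) := by gcongr; linarith

lemma fδ_nonneg {a m p θ : ℝ} (hm : 0 ≤ m) (hp : 0 ≤ p) (hmθ : -m ≤ a + θ) (hpθ : -p ≤ a - θ)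
    (h : m ^ 2 + p ^ 2 = 2 * a ^ 2 + 2 * θ ^ 2) : 0 ≤ fδ a m p θ := by
  have hm_le : oneSubMulExp m * exp (-θ) ≤
      exp a * (1 - (a + θ) - (m ^ 2 - (a + θ) ^ 2) / 2) := by
    calc _ ≤ exp (a + θ) * (1 - (a + θ) - (m ^ 2 - (a + θ) ^ 2) / 2) * exp (-θ) := by
          gcongr; exact oneSubMulExp_le_tangent hm hmθ
      _ = _ := by rw [mul_right_comm, ← exp_add, add_neg_cancel_right]
  have hp_le : oneSubMulExp p * exp θ ≤
      exp a * (1 - (a - θ) - (p ^ 2 - (a - θ) ^ 2) / 2) := by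
    calc _ ≤ exp (a - θ) * (1 - (a - θ) - (p ^ 2 - (a - θ) ^ 2) / 2) * exp θ := by
          gcongr; exact oneSubMulExp_le_tangent hp hpθ
      _ = _ := by rw [mul_right_comm, ← exp_add, sub_add_cancel]
  have hsum : exp a * (1 - (a + θ) - (m ^ 2 - (a + θ) ^ 2) / 2) +
      exp a * (1 - (a - θ) - (p ^ 2 - (a - θ) ^ 2) / 2) = 2 * oneSubMulExp a := by
    rw [oneSubMulExp]
    linear_combination (-exp a / 2) * h
  rw [fδ_eq_oneSubMulExp]
  linarith

lemma hasDerivAt_fδ_sqrt_minus {a p θ : ℝ} (hpos : 0 < 2 * a ^ 2 + 2 * θ ^ 2 - p ^ 2) :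
    HasDerivAt (fun a => fδ a √(2 * a ^ 2 + 2 * θ ^ 2 - p ^ 2) p θ)
      (2 * a * (exp (√(2 * a ^ 2 + 2 * θ ^ 2 - p ^ 2) - θ) - exp a)) a := by
  have hw : HasDerivAt (fun a : ℝ => 2 * a ^ 2 + 2 * θ ^ 2 - p ^ 2) (4 * a) a :=
    ((((hasDerivAt_pow 2 a).const_mul 2).add_const _).sub_const _).congr_deriv
      (by norm_num; ring)
  simp only [fδ_eq_oneSubMulExp]
  refine ((((hasDerivAt_oneSubMulExp a).const_mul 2).sub
    ((hasDerivAt_oneSubMulExp_sqrt hw hpos).mul_const _)).sub_const _).congr_deriv ?_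
  rw [sub_eq_add_neg _ θ, exp_add]
  ring

lemma monotoneOn_fδ_sqrt_minus {p θ : ℝ} (hp : 0 ≤ p) :
    MonotoneOn (fun a => fδ a √(2 * a ^ 2 + 2 * θ ^ 2 - p ^ 2) p θ) (Set.Icc 0 (θ - p)) := by
  have hbounds : ∀ a ∈ interior (Set.Icc 0 (θ - p)), 0 < a ∧ a < θ - p := fun a ha => by
    rwa [interior_Icc] at ha
  refine monotoneOn_of_hasDerivWithinAt_nonneg (convex_Icc 0 (θ - p))
    (by unfold fδ; fun_prop)
    (fun a ha => (hasDerivAt_fδ_sqrt_minus ?_).hasDerivWithinAt) fun a ha => ?_ <;>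
    obtain ⟨ha₀, haθ⟩ := hbounds a ha
  · nlinarith
  · have hle : a + θ ≤ √(2 * a ^ 2 + 2 * θ ^ 2 - p ^ 2) := le_sqrt_of_sq_le (by nlinarith)
    exact mul_nonneg (by linarith) (sub_nonneg.2 (exp_le_exp.2 (by linarith)))

lemma exp_neg_mul_oneSubMulExp_add_two_mul (r t : ℝ) :
    exp (-t) * oneSubMulExp (r + 2 * t) = exp t * (oneSubMulExp r - exp r * (2 * t)) := by
  have hexp : exp (-t) * exp (r + 2 * t) = exp t * exp r := by
    rw [← exp_add, ← exp_add]
    ring_nf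
  rw [oneSubMulExp, oneSubMulExp]
  linear_combination (1 - (r + 2 * t)) * hexp

lemma hasDerivAt_fδ_sqrt_plus {a m θ : ℝ} (hpos : 0 < 2 * a ^ 2 + 2 * θ ^ 2 - m ^ 2) :
    HasDerivAt (fun θ => fδ a m √(2 * a ^ 2 + 2 * θ ^ 2 - m ^ 2) θ)
      (exp (-θ) *
        (oneSubMulExp m - oneSubMulExp (√(2 * a ^ 2 + 2 * θ ^ 2 - m ^ 2) + 2 * θ))) θ := by
  have hw : HasDerivAt (fun θ : ℝ => 2 * a ^ 2 + 2 * θ ^ 2 - m ^ 2) (4 * θ) θ :=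
    ((((hasDerivAt_pow 2 θ).const_mul 2).const_add _).sub_const _).congr_deriv
      (by norm_num; ring)
  simp only [fδ_eq_oneSubMulExp]
  refine ((((hasDerivAt_neg θ).exp.const_mul _).const_sub _).sub
    ((hasDerivAt_oneSubMulExp_sqrt hw hpos).mul (Real.hasDerivAt_exp θ))).congr_deriv ?_
  rw [mul_sub, exp_neg_mul_oneSubMulExp_add_two_mul]
  ring

lemma monotoneOn_fδ_sqrt_plus {a m T : ℝ} (ha : 0 ≤ a) (hm : 0 ≤ m) (haT : a ≤ T)
    (hmT : m ^ 2 ≤ 2 * a ^ 2 + 2 * T ^ 2) :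
    MonotoneOn (fun θ => fδ a m √(2 * a ^ 2 + 2 * θ ^ 2 - m ^ 2) θ) (Set.Ici T) := by
  have hpos : ∀ θ ∈ interior (Set.Ici T), 0 < 2 * a ^ 2 + 2 * θ ^ 2 - m ^ 2 := fun θ hθ => by
    rw [interior_Ici, Set.mem_Ioi] at hθ
    nlinarith
  refine monotoneOn_of_hasDerivWithinAt_nonneg (convex_Ici T) (by unfold fδ; fun_prop)
    (fun θ hθ => (hasDerivAt_fδ_sqrt_plus (hpos θ hθ)).hasDerivWithinAt) fun θ hθ => ?_
  have haθ : a ≤ θ := haT.trans (interior_subset hθ)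
  have hr₀ := sqrt_nonneg (2 * a ^ 2 + 2 * θ ^ 2 - m ^ 2)
  have hr := sq_sqrt (hpos θ hθ).le
  set r := √(2 * a ^ 2 + 2 * θ ^ 2 - m ^ 2)
  have hmr : m ≤ r + 2 * θ := (sq_le_sq₀ hm (by linarith)).1 (by nlinarith)
  exact mul_nonneg (exp_pos _).le
    (sub_nonneg.2 (antitoneOn_oneSubMulExp hm (hm.trans hmr) hmr))

/-- The value of `f_δ` on the edge `a = a₊ = s` of the constraint surface, as a function of the
remaining parameter `θ = t`; the constraint then forces `a₋ = √(s ^ 2 + 2 * t ^ 2)`. -/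
noncomputable def edgeValue (s t : ℝ) : ℝ := fδ s √(s ^ 2 + 2 * t ^ 2) s t

lemma fδ_self (a : ℝ) : fδ a a a 0 = 0 := by
  rw [fδ, sub_zero, add_zero]
  ring

lemma edgeValue_zero {s : ℝ} (hs : 0 ≤ s) : edgeValue s 0 = 0 := by
  rw [edgeValue, zero_pow two_ne_zero, mul_zero, add_zero, sqrt_sq hs, fδ_self]

lemma hasDerivAt_edgeValue (s : ℝ) {t : ℝ} (ht : 0 < t) :
    HasDerivAt (edgeValue s)
      (exp t * (oneSubMulExp (√(s ^ 2 + 2 * t ^ 2) - 2 * t) - oneSubMulExp s)) t := by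
  have hw : HasDerivAt (fun t : ℝ => s ^ 2 + 2 * t ^ 2) (4 * t) t :=
    (((hasDerivAt_pow 2 t).const_mul 2).const_add _).congr_deriv (by norm_num; ring)
  have hpos : 0 < s ^ 2 + 2 * t ^ 2 := by positivity
  have heq : edgeValue s = fun t => 2 * oneSubMulExp s -
      oneSubMulExp √(s ^ 2 + 2 * t ^ 2) * exp (-t) - oneSubMulExp s * exp t :=
    funext fun t => fδ_eq_oneSubMulExp _ _ _ _
  rw [heq]
  refine ((((hasDerivAt_oneSubMulExp_sqrt hw hpos).mul (hasDerivAt_neg t).exp).const_sub _).sub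
    ((Real.hasDerivAt_exp t).const_mul _)).congr_deriv ?_
  have := exp_neg_mul_oneSubMulExp_add_two_mul √(s ^ 2 + 2 * t ^ 2) (-t)
  rw [neg_neg, mul_neg, ← sub_eq_add_neg] at this
  rw [mul_sub, this]
  ring

lemma antitoneOn_sqrt_sub_two_mul (s : ℝ) :
    AntitoneOn (fun t => √(s ^ 2 + 2 * t ^ 2) - 2 * t) (Set.Ici 0) := by
  intro x hx y _ hxy
  have hx₀ : 0 ≤ x := hx
  have hr := sq_sqrt (show 0 ≤ s ^ 2 + 2 * x ^ 2 by positivity)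
  have hxr : x ≤ √(s ^ 2 + 2 * x ^ 2) := le_sqrt_of_sq_le (by nlinarith)
  have : √(s ^ 2 + 2 * y ^ 2) ≤ √(s ^ 2 + 2 * x ^ 2) + 2 * (y - x) :=
    sqrt_le_iff.2 ⟨by linarith, by
      nlinarith [mul_nonneg (sub_nonneg.2 hxy) (sub_nonneg.2 hxr)]⟩
  dsimp only
  linarith

-- The derivative changes sign once: `√(s ^ 2 + 2 * t ^ 2) - 2 * t` decreases from `s`, and the
-- points `u ≤ s` with `oneSubMulExp s ≤ oneSubMulExp u` form an interval ending at `s`.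
lemma quasiconcaveOn_edgeValue {s : ℝ} (hs : 0 ≤ s) :
    QuasiconcaveOn ℝ (Set.Ici 0) (edgeValue s) := by
  refine quasiconcaveOn_of_hasDerivAt_single_crossing (convex_Ici 0)
    (by unfold edgeValue fδ; fun_prop) (fun t ht => hasDerivAt_edgeValue s (by simpa using ht))
    fun x hx y _ hxy hy' => ?_
  have hx₀ : (0 : ℝ) ≤ x := interior_subset hx
  have hanti := antitoneOn_sqrt_sub_two_mul s
  have hle_s : √(s ^ 2 + 2 * x ^ 2) - 2 * x ≤ s := by
    simpa [sqrt_sq hs] using hanti Set.self_mem_Ici hx₀ hx₀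
  have hle : √(s ^ 2 + 2 * y ^ 2) - 2 * y ≤ √(s ^ 2 + 2 * x ^ 2) - 2 * x :=
    hanti hx₀ (hx₀.trans hxy) hxy
  refine mul_nonneg (exp_pos x).le (sub_nonneg.2 ?_)
  rcases le_total 0 (√(s ^ 2 + 2 * x ^ 2) - 2 * x) with h | h
  · exact antitoneOn_oneSubMulExp h hs hle_s
  · exact (sub_nonneg.1 (nonneg_of_mul_nonneg_right hy' (exp_pos y))).trans
      (monotoneOn_oneSubMulExp (hle.trans h) h hle)

lemma min_zero_edgeValue_le {s t T : ℝ} (hs : 0 ≤ s) (ht : t ∈ Set.Icc 0 T) :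
    min 0 (edgeValue s T) ≤ edgeValue s t := by
  have hT : 0 ≤ T := ht.1.trans ht.2
  have hconv := quasiconcaveOn_edgeValue hs (min 0 (edgeValue s T))
  exact (hconv.ordConnected.out ⟨Set.self_mem_Ici, by simp [edgeValue_zero hs]⟩
    ⟨hT, min_le_right _ _⟩ ht).2

lemma exists_edgeValue_le_fδ {s a m p θ : ℝ} (hs : 0 ≤ s) (ha : s ≤ a) (hm : 0 ≤ m) (hp : s ≤ p)
    (hθ : a + p ≤ θ) (h : m ^ 2 + p ^ 2 = 2 * a ^ 2 + 2 * θ ^ 2) :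
    ∃ t, 0 ≤ t ∧ s ^ 2 + 2 * t ^ 2 ≤ m ^ 2 ∧ edgeValue s t ≤ fδ a m p θ := by
  have hp₀ : 0 ≤ p := hs.trans hp
  have hm_eq : √(2 * a ^ 2 + 2 * θ ^ 2 - p ^ 2) = m := by
    rw [← h, add_sub_cancel_right, sqrt_sq hm]
  set m' := √(2 * s ^ 2 + 2 * θ ^ 2 - p ^ 2)
  have hm'₀ : 0 ≤ m' := sqrt_nonneg _
  have hm' : m' ^ 2 = 2 * s ^ 2 + 2 * θ ^ 2 - p ^ 2 := sq_sqrt (by nlinarith)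
  set t := √(θ ^ 2 - (p ^ 2 - s ^ 2) / 2)
  have ht : t ^ 2 = θ ^ 2 - (p ^ 2 - s ^ 2) / 2 := sq_sqrt (by nlinarith)
  have hst : s ≤ t := le_sqrt_of_sq_le (by nlinarith)
  have htθ : t ≤ θ := sqrt_le_iff.2 ⟨by linarith, by nlinarith⟩
  refine ⟨t, sqrt_nonneg _, by nlinarith, ?_⟩
  calc edgeValue s t = fδ s m' √(2 * s ^ 2 + 2 * t ^ 2 - m' ^ 2) t := by
        rw [edgeValue, show s ^ 2 + 2 * t ^ 2 = m' ^ 2 by linarith, sqrt_sq hm'₀,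
          show 2 * s ^ 2 + 2 * t ^ 2 - m' ^ 2 = s ^ 2 by linarith, sqrt_sq hs]
    _ ≤ fδ s m' √(2 * s ^ 2 + 2 * θ ^ 2 - m' ^ 2) θ :=
        monotoneOn_fδ_sqrt_plus hs hm'₀ hst (by nlinarith) Set.self_mem_Ici htθ htθ
    _ = fδ s m' p θ := by rw [hm', sub_sub_cancel, sqrt_sq hp₀]
    _ ≤ fδ a √(2 * a ^ 2 + 2 * θ ^ 2 - p ^ 2) p θ :=
        monotoneOn_fδ_sqrt_minus hp₀ ⟨hs, by linarith⟩ ⟨hs.trans ha, by linarith⟩ ha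
    _ = fδ a m p θ := by rw [hm_eq]

lemma min_zero_edgeValue_le_fδ {s a m p θ T : ℝ} (hs : 0 ≤ s) (ha : s ≤ a) (hm : 0 ≤ m)
    (hp : s ≤ p) (hθ : 0 ≤ θ) (h : m ^ 2 + p ^ 2 = 2 * a ^ 2 + 2 * θ ^ 2) (hT : 0 ≤ T)
    (hmT : m ^ 2 ≤ s ^ 2 + 2 * T ^ 2) : min 0 (edgeValue s T) ≤ fδ a m p θ := by
  rcases le_total θ (a + p) with hθap | hθap
  · exact (min_le_left _ _).trans
      (fδ_nonneg hm (hs.trans hp) (by linarith) (by linarith) h)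
  · obtain ⟨t, ht₀, htm, hle⟩ := exists_edgeValue_le_fδ hs ha hm hp hθap h
    have htT : t ≤ T := (abs_le_of_sq_le_sq' (by linarith) hT).2
    exact (min_zero_edgeValue_le hs ⟨ht₀, htT⟩).trans hle

lemma sqrt_sq_sub_sq_le {δ : ℝ} (ε : ℝ) (hδ : 0 ≤ δ) : √(δ ^ 2 - ε ^ 2) ≤ δ :=
  sqrt_le_iff.2 ⟨hδ, sub_le_self _ (sq_nonneg ε)⟩

lemma fδ_corner (δ ε : ℝ) : fδ √(δ ^ 2 - ε ^ 2) δ √(δ ^ 2 - ε ^ 2) (ε / √2) = g δ ε := by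
  rw [fδ, g, exp_add]
  ring

lemma sq_sqrt_sub_add_two_mul_sq {δ ε : ℝ} (hε : 0 ≤ ε) (hεδ : ε ≤ δ) :
    √(δ ^ 2 - ε ^ 2) ^ 2 + 2 * (ε / √2) ^ 2 = δ ^ 2 := by
  rw [sq_sqrt (sub_nonneg.2 (pow_le_pow_left₀ hε hεδ 2)), div_pow, sq_sqrt zero_le_two]
  ring

lemma edgeValue_corner {δ ε : ℝ} (hε : 0 ≤ ε) (hεδ : ε ≤ δ) :
    edgeValue √(δ ^ 2 - ε ^ 2) (ε / √2) = g δ ε := by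
  rw [edgeValue, sq_sqrt_sub_add_two_mul_sq hε hεδ, sqrt_sq (hε.trans hεδ), fδ_corner]

lemma diagonal_mem_Sset {δ : ℝ} (ε : ℝ) (hδ : 0 ≤ δ) : (δ, δ, δ, 0) ∈ Sset δ ε := by
  have hδmem : δ ∈ Set.Icc √(δ ^ 2 - ε ^ 2) δ := ⟨sqrt_sq_sub_sq_le ε hδ, le_rfl⟩
  exact ⟨hδmem, hδmem, hδmem, le_rfl, le_rfl, by ring⟩

lemma corner_mem_Sset {δ ε : ℝ} (hε : 0 ≤ ε) (hεδ : ε ≤ δ) :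
    (√(δ ^ 2 - ε ^ 2), δ, √(δ ^ 2 - ε ^ 2), ε / √2) ∈ Sset δ ε := by
  have hle : √(δ ^ 2 - ε ^ 2) ≤ δ := sqrt_sq_sub_sq_le ε (hε.trans hεδ)
  refine ⟨⟨le_rfl, hle⟩, ⟨hle, le_rfl⟩, ⟨le_rfl, hle⟩, hle, by positivity, ?_⟩
  linarith [sq_sqrt_sub_add_two_mul_sq hε hεδ]

lemma min_zero_g_le_fδ {δ ε : ℝ} (hε : 0 ≤ ε) (hεδ : ε ≤ δ)
    {p : ℝ × ℝ × ℝ × ℝ} (hp : p ∈ Sset δ ε) :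
    min 0 (g δ ε) ≤ fδ p.1 p.2.1 p.2.2.1 p.2.2.2 := by
  obtain ⟨ha, hm, hp, -, hθ, h⟩ := hp
  have hs : 0 ≤ √(δ ^ 2 - ε ^ 2) := sqrt_nonneg _
  have hm₀ : 0 ≤ p.2.1 := hs.trans hm.1
  rw [← edgeValue_corner hε hεδ]
  refine min_zero_edgeValue_le_fδ hs ha.1 hm₀ hp.1 hθ h (by positivity) ?_
  rw [sq_sqrt_sub_add_two_mul_sq hε hεδ]
  exact pow_le_pow_left₀ hm₀ hm.2 2

lemma exists_mem_Sset_fδ_eq {δ ε : ℝ} (hε : 0 ≤ ε) (hεδ : ε ≤ δ) :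
    ∃ p ∈ Sset δ ε, fδ p.1 p.2.1 p.2.2.1 p.2.2.2 = min 0 (g δ ε) := by
  rcases le_total 0 (g δ ε) with hg | hg
  · exact ⟨_, diagonal_mem_Sset ε (hε.trans hεδ), by rw [min_eq_left hg, fδ_self]⟩
  · exact ⟨_, corner_mem_Sset hε hεδ, by rw [min_eq_right hg, fδ_corner]⟩

theorem stmt15_general (ε δ : ℝ) (hε : 0 ≤ ε) (hεδ : ε ≤ δ) :
    (∀ p ∈ Sset δ ε, min 0 (g δ ε) ≤ fδ p.1 p.2.1 p.2.2.1 p.2.2.2) ∧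
    (∃ p ∈ Sset δ ε, fδ p.1 p.2.1 p.2.2.1 p.2.2.2 = min 0 (g δ ε)) ∧
    (∀ a ∈ Set.Icc (Real.sqrt (δ ^ 2 - ε ^ 2)) δ, fδ a a a 0 = 0) ∧
    fδ (Real.sqrt (δ ^ 2 - ε ^ 2)) δ (Real.sqrt (δ ^ 2 - ε ^ 2)) (ε / Real.sqrt 2)
      = g δ ε :=
  ⟨fun _ => min_zero_g_le_fδ hε hεδ, exists_mem_Sset_fδ_eq hε hεδ,
    fun a _ => fδ_self a, fδ_corner δ ε⟩

/-- `min(0, g(δ,ε))` is the least value of `f_δ` on `S_{δ,ε}`, and it is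
attained: `f_δ(a,a,a,0) = 0` and the corner value is `g(δ,ε)`. -/
theorem stmt15 (ε δ : ℝ) (hε0 : 0 < ε) (hε1 : ε < Real.sqrt 2 * Real.log 2)
    (hδ : δ ∈ Set.Ioo ε 1) :
    (∀ p ∈ Sset δ ε, min 0 (g δ ε) ≤ fδ p.1 p.2.1 p.2.2.1 p.2.2.2) ∧
    (∃ p ∈ Sset δ ε, fδ p.1 p.2.1 p.2.2.1 p.2.2.2 = min 0 (g δ ε)) ∧
    (∀ a ∈ Set.Icc (Real.sqrt (δ ^ 2 - ε ^ 2)) δ, fδ a a a 0 = 0) ∧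
    fδ (Real.sqrt (δ ^ 2 - ε ^ 2)) δ (Real.sqrt (δ ^ 2 - ε ^ 2)) (ε / Real.sqrt 2)
      = g δ ε :=
  stmt15_general ε δ hε0.le hδ.1.le
end

section
/- For every ε > 0, the equation g⁻(δ, ε) = 0 has exactly one solution δ in the open interval (ε, 3ε/(2√2)). -/
open MeasureTheory Real

/-- The function `g⁻(δ,ε)` whose root determines the sharp dyadic parameter
`δ⁻(ε)` for the lower Bellman function. -/
noncomputable def gm (δ ε : ℝ) : ℝ :=
  (1 + Real.sqrt (δ ^ 2 - ε ^ 2)) * Real.exp (-Real.sqrt (δ ^ 2 - ε ^ 2)) *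
      (2 - Real.exp (-ε / Real.sqrt 2)) -
    (1 + δ) * Real.exp (-δ + ε / Real.sqrt 2)

/-!
Put `ε = √2 t` and `Γ₂ x = (1 + x) e⁻ˣ`, so that `Γ₂' x = -x e⁻ˣ` and
`g⁻(δ, ε) = Γ₂(s) (2 - e⁻ᵗ) - eᵗ Γ₂(δ)` with `s = √(δ² - 2t²)`. The singularity of `s` at `δ = ε`
cancels in the derivative `∂g⁻/∂δ = δ (e^(t-δ) - e⁻ˢ (2 - e⁻ᵗ))`. Up to `δ = 3t/2` one has
`s ≤ δ - t`, with equality at the endpoint, so `g⁻` is strictly decreasing on `[ε, 3t/2]`.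
It is positive at `δ = ε` because `e⁻ˣ + eˣ Γ₂(√2 x)` equals `2` at `0` and decreases in `x ≥ 0`,
which comes down to `1 + y < e^y`. Negativity at `δ = 3t/2` amounts to `(2 - t) eᵗ < 2 + t`, which
for `0 < t < 2` says that `eᵗ` lies below its Padé approximant `(2 + t) / (2 - t)`.
-/

open Set

theorem existsUnique_mem_Ioo_eq_of_strictAntiOn {α β : Type*}
    [ConditionallyCompleteLinearOrder α] [TopologicalSpace α] [OrderTopology α] [DenselyOrdered α]
    [LinearOrder β] [TopologicalSpace β] [OrderClosedTopology β] {f : α → β} {a b : α} {c : β}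
    (hab : a ≤ b) (hcont : ContinuousOn f (Icc a b)) (hanti : StrictAntiOn f (Icc a b))
    (hc : c ∈ Ioo (f b) (f a)) : ∃! x, x ∈ Ioo a b ∧ f x = c := by
  obtain ⟨x, hx, hfx⟩ := intermediate_value_Ioo' hab hcont hc
  refine ⟨x, ⟨hx, hfx⟩, fun y ⟨hy, hfy⟩ ↦ ?_⟩
  exact hanti.injOn (Ioo_subset_Icc_self hy) (Ioo_subset_Icc_self hx) (hfy.trans hfx.symm)

theorem two_sub_mul_exp_lt_two_add {t : ℝ} (ht : 0 < t) : (2 - t) * exp t < 2 + t := by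
  rcases le_or_gt 2 t with h2t | ht2
  · exact (mul_nonpos_of_nonpos_of_nonneg (sub_nonpos.2 h2t) (exp_pos t).le).trans_lt (by linarith)
  · rw [mul_comm]
    exact (lt_div_iff₀ (sub_pos.2 ht2)).1 (exp_lt_two_add_div_two_sub ht ht2)

/-- The upper incomplete gamma function `Γ(2, x) = ∫ y in (x, ∞), y e⁻ʸ` in closed form. Both terms
of `gm` are multiples of its values. -/
noncomputable def upperGammaTwo (x : ℝ) : ℝ := (1 + x) * exp (-x)

theorem hasDerivAt_upperGammaTwo (x : ℝ) : HasDerivAt upperGammaTwo (-(x * exp (-x))) x := by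
  have h := ((hasDerivAt_id' x).const_add 1).mul (hasDerivAt_neg' x).exp
  exact h.congr_deriv (by ring)

theorem hasDerivAt_upperGammaTwo_sqrt_sq_sub {c x : ℝ} (hc : c < x ^ 2) :
    HasDerivAt (fun y ↦ upperGammaTwo √(y ^ 2 - c)) (-(x * exp (-√(x ^ 2 - c)))) x := by
  have hpos : 0 < x ^ 2 - c := sub_pos.2 hc
  have h := (hasDerivAt_upperGammaTwo _).comp x (((hasDerivAt_pow 2 x).sub_const c).sqrt hpos.ne')
  refine h.congr_deriv ?_
  push_cast
  field_simp

theorem hasDerivAt_exp_mul_upperGammaTwo_mul (r x : ℝ) :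
    HasDerivAt (fun y ↦ exp y * upperGammaTwo (r * y))
      (exp (x - r * x) * (1 + r * (1 - r) * x)) x := by
  have hΓ := (hasDerivAt_upperGammaTwo (r * x)).comp x ((hasDerivAt_id' x).const_mul r)
  refine ((Real.hasDerivAt_exp x).mul hΓ).congr_deriv ?_
  simp only [upperGammaTwo, Function.comp_apply]
  rw [sub_eq_add_neg x, exp_add]
  ring

theorem one_add_mul_one_sub_mul_lt_exp {r x : ℝ} (hr : √2 ≤ r) (hx : 0 < x) :
    1 + r * (1 - r) * x < exp ((r - 2) * x) := by
  have hr2 : 2 ≤ r ^ 2 := (sqrt_le_left ((sqrt_nonneg 2).trans hr)).1 hr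
  have hr1 : 1 < r := one_lt_sqrt_two.trans_le hr
  have hne : r * (1 - r) * x ≠ 0 :=
    mul_ne_zero (mul_ne_zero (by linarith) (sub_ne_zero.2 hr1.ne)) hx.ne'
  calc 1 + r * (1 - r) * x < exp (r * (1 - r) * x) := by
        linarith [add_one_lt_exp hne]
    _ ≤ exp ((r - 2) * x) := by
        gcongr
        linarith

theorem exp_mul_upperGammaTwo_mul_lt {r t : ℝ} (hr : √2 ≤ r) (ht : 0 < t) :
    exp t * upperGammaTwo (r * t) < 2 - exp (-t) := by
  let f : ℝ → ℝ := fun x ↦ exp (-x) + exp x * upperGammaTwo (r * x)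
  have hf (x : ℝ) : HasDerivAt f
      (exp (x - r * x) * (1 + r * (1 - r) * x - exp ((r - 2) * x))) x := by
    have hexp : exp (-x) = exp (x - r * x) * exp ((r - 2) * x) := by
      rw [← exp_add]
      ring_nf
    refine ((hasDerivAt_neg' x).exp.add
      (hasDerivAt_exp_mul_upperGammaTwo_mul r x)).congr_deriv ?_
    rw [hexp]
    ring
  have hanti : StrictAntiOn f (Ici 0) := by
    refine strictAntiOn_of_hasDerivWithinAt_neg (convex_Ici 0)
      (fun x _ ↦ (hf x).continuousAt.continuousWithinAt) (fun x _ ↦ (hf x).hasDerivWithinAt)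
      fun x hx ↦ ?_
    rw [interior_Ici] at hx
    exact mul_neg_of_pos_of_neg (exp_pos _) (sub_neg.2 (one_add_mul_one_sub_mul_lt_exp hr hx))
  have hlt : f t < 2 := by
    have h0 : f 0 = 2 := by norm_num [f, upperGammaTwo]
    exact h0 ▸ hanti self_mem_Ici ht.le ht
  exact lt_sub_iff_add_lt'.2 hlt

theorem gm_sqrt_two_mul (δ t : ℝ) :
    gm δ (√2 * t) =
      upperGammaTwo √(δ ^ 2 - 2 * t ^ 2) * (2 - exp (-t)) - exp t * upperGammaTwo δ := by
  have hsq : (√2 * t) ^ 2 = 2 * t ^ 2 := by rw [mul_pow, sq_sqrt zero_le_two]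
  have hdiv : √2 * t / √2 = t := mul_div_cancel_left₀ t (by positivity)
  rw [gm, upperGammaTwo, upperGammaTwo, hsq, neg_div, hdiv, exp_add]
  ring

theorem continuous_gm_left (ε : ℝ) : Continuous fun δ ↦ gm δ ε := by
  unfold gm
  fun_prop

theorem hasDerivAt_gm_left {δ t : ℝ} (h : 2 * t ^ 2 < δ ^ 2) :
    HasDerivAt (fun x ↦ gm x (√2 * t))
      (δ * (exp (t - δ) - exp (-√(δ ^ 2 - 2 * t ^ 2)) * (2 - exp (-t)))) δ := by
  simp only [gm_sqrt_two_mul]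
  refine (((hasDerivAt_upperGammaTwo_sqrt_sq_sub h).mul_const _).sub
    ((hasDerivAt_upperGammaTwo δ).const_mul _)).congr_deriv ?_
  rw [sub_eq_add_neg t, exp_add]
  ring

theorem sqrt_sq_sub_two_mul_sq_le {δ t : ℝ} (htδ : t ≤ δ) (hδt : δ ≤ 3 / 2 * t) :
    √(δ ^ 2 - 2 * t ^ 2) ≤ δ - t := by
  have ht : 0 ≤ t := by linarith
  refine sqrt_le_iff.2 ⟨sub_nonneg.2 htδ, ?_⟩
  linarith [mul_le_mul_of_nonneg_right hδt ht]

theorem strictAntiOn_gm_left {t : ℝ} (ht : 0 < t) :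
    StrictAntiOn (fun δ ↦ gm δ (√2 * t)) (Icc (√2 * t) (3 / 2 * t)) := by
  refine strictAntiOn_of_deriv_neg (convex_Icc _ _) (continuous_gm_left _).continuousOn
    fun δ hδ ↦ ?_
  rw [interior_Icc] at hδ
  have htδ : t < δ := (lt_mul_of_one_lt_left ht one_lt_sqrt_two).trans hδ.1
  have hsq : 2 * t ^ 2 < δ ^ 2 := by
    calc 2 * t ^ 2 = (√2 * t) ^ 2 := by rw [mul_pow, sq_sqrt zero_le_two]
      _ < δ ^ 2 := by gcongr; exact hδ.1
  rw [(hasDerivAt_gm_left hsq).deriv]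
  refine mul_neg_of_pos_of_neg (ht.trans htδ) (sub_neg.2 ?_)
  calc exp (t - δ) ≤ exp (-√(δ ^ 2 - 2 * t ^ 2)) :=
        exp_le_exp.2 (by linarith [sqrt_sq_sub_two_mul_sq_le htδ.le hδ.2.le])
    _ < exp (-√(δ ^ 2 - 2 * t ^ 2)) * (2 - exp (-t)) :=
        lt_mul_of_one_lt_right (exp_pos _) (by linarith [exp_lt_one_iff.2 (neg_lt_zero.2 ht)])

theorem gm_self_pos {t : ℝ} (ht : 0 < t) : 0 < gm (√2 * t) (√2 * t) := by
  have hΓ : upperGammaTwo 0 = 1 := by simp [upperGammaTwo]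
  rw [gm_sqrt_two_mul, mul_pow, sq_sqrt zero_le_two, sub_self, sqrt_zero, hΓ, one_mul, sub_pos]
  exact exp_mul_upperGammaTwo_mul_lt le_rfl ht

theorem gm_three_halves_mul_neg {t : ℝ} (ht : 0 < t) : gm (3 / 2 * t) (√2 * t) < 0 := by
  have hsqrt : √((3 / 2 * t) ^ 2 - 2 * t ^ 2) = t / 2 := by
    rw [show (3 / 2 * t) ^ 2 - 2 * t ^ 2 = (t / 2) ^ 2 by ring, sqrt_sq (by positivity)]
  have hexp : exp (-(t / 2)) = exp t * exp (-(3 / 2 * t)) := by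
    rw [← exp_add]
    ring_nf
  have hinv : exp t * exp (-t) = 1 := by rw [← exp_add, add_neg_cancel, exp_zero]
  have hfactor : gm (3 / 2 * t) (√2 * t) =
      exp (-(3 / 2 * t)) / 2 * ((2 - t) * exp t - (2 + t)) := by
    rw [gm_sqrt_two_mul, hsqrt, upperGammaTwo, upperGammaTwo, hexp]
    linear_combination (-(1 + t / 2) * exp (-(3 / 2 * t))) * hinv
  rw [hfactor]
  exact mul_neg_of_pos_of_neg (by positivity) (sub_neg.2 (two_sub_mul_exp_lt_two_add ht))

/-- For every `ε > 0`, the equation `g⁻(δ,ε) = 0` has exactly one solution `δ`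
in `(ε, 3ε/(2√2))`. -/
theorem stmt17 (ε : ℝ) (hε : 0 < ε) :
    ∃! δ : ℝ, δ ∈ Set.Ioo ε (3 * ε / (2 * Real.sqrt 2)) ∧ gm δ ε = 0 := by
  obtain ⟨t, rfl⟩ : ∃ t, ε = √2 * t := ⟨ε / √2, by field_simp⟩
  have ht : 0 < t := pos_of_mul_pos_right hε (sqrt_nonneg 2)
  have hright : 3 * (√2 * t) / (2 * √2) = 3 / 2 * t := by field_simp
  have hle : √2 * t ≤ 3 / 2 * t := by
    gcongr
    exact sqrt_le_iff.2 ⟨by norm_num, by norm_num⟩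
  rw [hright]
  exact existsUnique_mem_Ioo_eq_of_strictAntiOn hle (continuous_gm_left _).continuousOn
    (strictAntiOn_gm_left ht) ⟨gm_three_halves_mul_neg ht, gm_self_pos ht⟩
end

section
/- Let 0 < ε < √2·log 2 and let δ ∈ (ε, 1) satisfy g(δ, ε) = 0. If x⁻, x⁺ ∈ Ω_ε and the midpoint (x⁻ + x⁺)/2 ∈ Ω_ε, then B⁺_δ((x⁻ + x⁺)/2) ≥ (1/2)·B⁺_δ(x⁻) + (1/2)·B⁺_δ(x⁺). -/
open MeasureTheory Real
/-- The parabolic strip `Ω_ε = {x : x₁² ≤ x₂ ≤ x₁² + ε²}`. -/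
def Omega (ε : ℝ) : Set (ℝ × ℝ) := {x | x.1 ^ 2 ≤ x.2 ∧ x.2 ≤ x.1 ^ 2 + ε ^ 2}

/-- The upper Bellman function `B⁺_δ`. -/
noncomputable def Bp (δ : ℝ) (x : ℝ × ℝ) : ℝ :=
  (1 - Real.sqrt (δ ^ 2 + x.1 ^ 2 - x.2)) / (1 - δ) *
    Real.exp (x.1 + Real.sqrt (δ ^ 2 + x.1 ^ 2 - x.2) - δ)

/-- The lower Bellman function `B⁻_δ`. -/
noncomputable def Bm (δ : ℝ) (x : ℝ × ℝ) : ℝ :=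
  (1 + Real.sqrt (δ ^ 2 + x.1 ^ 2 - x.2)) / (1 + δ) *
    Real.exp (x.1 - Real.sqrt (δ ^ 2 + x.1 ^ 2 - x.2) + δ)
/-! The function `B⁺_δ` factors as an exponential of `x₁` times `bellmanProfile (stripDepth δ x)`.
Writing `a`, `b`, `c` for the depths of `x⁻`, `x⁺` and the midpoint, and `t = (x₁⁺ - x₁⁻) / 2`,
midpoint concavity becomes `φ a * e⁻ᵗ + φ b * eᵗ ≤ 2 * φ c`, where `a² + b² = 2c² + 2t²`.
If `t ≤ c`, this follows from the concavity of `r² ↦ φ r`. Otherwise the segment leaves the large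
strip, and monotonicity or quasiconcavity along three one-parameter families reduces the inequality
to extreme configurations: the midpoint moves to the upper boundary of `Ω_ε` (or to the case
`t = c`), then so does `x⁺`, and then `x⁻` moves to the lower boundary (or `t` to `0`). In that last
configuration the inequality is `0 ≤ g δ ε`. -/

section Quasiconcave

theorem quasiconcaveOn_of_hasDerivAt_mul_antitoneOn {D : Set ℝ} (hD : Convex ℝ D)
    {f w h : ℝ → ℝ} (hf : ContinuousOn f D)
    (hf' : ∀ x ∈ interior D, HasDerivAt f (w x * h x) x)
    (hw : ∀ x ∈ interior D, 0 ≤ w x) (hh : AntitoneOn h (interior D)) :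
    QuasiconcaveOn ℝ D f := by
  refine fun r ↦ (Set.ordConnected_iff.2 ?_).convex
  rintro p ⟨hpD, hp⟩ q ⟨hqD, hq⟩ - x hx
  have hsub : Set.Icc p q ⊆ D := hD.ordConnected.out hpD hqD
  have hint : Set.Ioo p q ⊆ interior D := interior_Icc (a := p) (b := q) ▸ interior_mono hsub
  refine ⟨hsub hx, ?_⟩
  by_contra! hlt
  have hpx : p < x := hx.1.lt_of_ne (by rintro rfl; exact hlt.not_ge hp)
  have hxq : x < q := hx.2.lt_of_ne (by rintro rfl; exact hlt.not_ge hq)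
  obtain ⟨u, hu, hslope_u⟩ := exists_hasDerivAt_eq_slope f (fun s ↦ w s * h s) hpx
    (hf.mono ((Set.Icc_subset_Icc_right hx.2).trans hsub))
    (fun s hs ↦ hf' s (hint ⟨hs.1, hs.2.trans hxq⟩))
  obtain ⟨v, hv, hslope_v⟩ := exists_hasDerivAt_eq_slope f (fun s ↦ w s * h s) hxq
    (hf.mono ((Set.Icc_subset_Icc_left hx.1).trans hsub))
    (fun s hs ↦ hf' s (hint ⟨hpx.trans hs.1, hs.2⟩))
  have huD : u ∈ interior D := hint ⟨hu.1, hu.2.trans hxq⟩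
  have hvD : v ∈ interior D := hint ⟨hpx.trans hv.1, hv.2⟩
  have hdec : w u * h u < 0 := hslope_u ▸ div_neg_of_neg_of_pos (by linarith) (by linarith)
  have hinc : 0 < w v * h v := hslope_v ▸ div_pos (by linarith) (by linarith)
  have hhv : 0 < h v := pos_of_mul_pos_right hinc (hw v hvD)
  have hhu : 0 < h u := hhv.trans_le (hh huD hvD (hu.2.trans hv.1).le)
  exact hdec.not_ge (mul_nonneg (hw u huD) hhu.le)

theorem le_of_quasiconcaveOn_of_mem_Icc {𝕜 β : Type*} [Field 𝕜] [LinearOrder 𝕜]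
    [IsStrictOrderedRing 𝕜] [LE β] {D : Set 𝕜} {f : 𝕜 → β} (hf : QuasiconcaveOn 𝕜 D f)
    {p q x : 𝕜} {r : β} (hpD : p ∈ D) (hqD : q ∈ D) (hx : x ∈ Set.Icc p q)
    (hp : r ≤ f p) (hq : r ≤ f q) : r ≤ f x :=
  ((hf r).ordConnected.out ⟨hpD, hp⟩ ⟨hqD, hq⟩ hx).2

end Quasiconcave

section Elementary

theorem convexOn_sinh : ConvexOn ℝ (Set.Ici 0) sinh := by
  refine convexOn_of_deriv2_nonneg' (convex_Ici 0) differentiable_sinh.differentiableOn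
    (by simpa only [Real.deriv_sinh] using differentiable_cosh.differentiableOn) fun x hx ↦ ?_
  simpa only [Function.iterate_succ, Function.iterate_zero, Function.comp_apply, id,
    Real.deriv_sinh, Real.deriv_cosh] using sinh_nonneg_iff.2 hx

theorem antitoneOn_div_sinh : AntitoneOn (fun x ↦ x / sinh x) (Set.Ioi 0) := by
  intro x (hx : 0 < x) y (hy : 0 < y) hxy
  have hsecant := convexOn_sinh.secant_mono (Set.mem_Ici.2 le_rfl) (Set.mem_Ici.2 hx.le)
    (Set.mem_Ici.2 hy.le) hx.ne' hy.ne' hxy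
  simp only [sinh_zero, sub_zero] at hsecant
  simpa only [inv_div] using inv_anti₀ (div_pos (sinh_pos_iff.2 hx) hx) hsecant

theorem exp_mul_exp_neg (x : ℝ) : exp x * exp (-x) = 1 := by
  rw [← exp_add, add_neg_cancel, exp_zero]

theorem exp_two_mul (x : ℝ) : exp (2 * x) = exp x * exp x := by
  rw [two_mul, exp_add]

theorem exp_sub_one_eq_mul_sinh (x : ℝ) : exp x - 1 = 2 * exp (x / 2) * sinh (x / 2) := by
  have hsq : exp x = exp (x / 2) * exp (x / 2) := by rw [← exp_add, add_halves]
  rw [sinh_eq, hsq]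
  linear_combination exp_mul_exp_neg (x / 2)

theorem antitoneOn_sqrt_add_two_mul_sq_sub {m : ℝ} (hm : 0 ≤ m) :
    AntitoneOn (fun s ↦ √(m + 2 * s ^ 2) - 3 / 2 * s) (Set.Ici 0) := by
  intro u (hu : 0 ≤ u) v _ huv
  have hsq : √(m + 2 * u ^ 2) ^ 2 = m + 2 * u ^ 2 := sq_sqrt (by positivity)
  have hlow : 4 / 3 * u ≤ √(m + 2 * u ^ 2) := le_sqrt_of_sq_le (by nlinarith)
  have hlip : √(m + 2 * v ^ 2) ≤ √(m + 2 * u ^ 2) + 3 / 2 * (v - u) := by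
    refine sqrt_le_iff.2 ⟨by linarith [sqrt_nonneg (m + 2 * u ^ 2)], ?_⟩
    nlinarith [mul_nonneg (sub_nonneg.2 huv) (sub_nonneg.2 hlow)]
  linarith

theorem hasDerivAt_sq (x : ℝ) : HasDerivAt (fun s ↦ s ^ 2) (2 * x) x := by
  simpa using hasDerivAt_pow 2 x

/-- On the right-hand side, unlike on the left, the derivative in `t` of each of the families
considered below has a computable sign pattern. -/
theorem mul_exp_neg_add_mul_exp_le_iff {x y z t : ℝ} :
    x * exp (-t) + y * exp t ≤ 2 * z ↔ x ≤ 2 * z * exp t - y * exp (2 * t) := by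
  have hscale : exp t * (2 * z - (x * exp (-t) + y * exp t)) =
      2 * z * exp t - y * exp (2 * t) - x := by
    rw [exp_two_mul]; linear_combination (-x) * exp_mul_exp_neg t
  rw [← sub_nonneg, ← mul_nonneg_iff_of_pos_left (exp_pos t), hscale, sub_nonneg]

theorem hasDerivAt_two_mul_exp_sub_mul_exp {Z Y : ℝ → ℝ} {Z' Y' s : ℝ} (hZ : HasDerivAt Z Z' s)
    (hY : HasDerivAt Y Y' s) :
    HasDerivAt (fun s ↦ 2 * Z s * exp s - Y s * exp (2 * s))
      (2 * exp s * (Z s + Z') - exp (2 * s) * (2 * Y s + Y')) s := by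
  have hexp : HasDerivAt (fun s ↦ exp (2 * s)) (exp (2 * s) * 2) s := by
    simpa using ((hasDerivAt_id s).const_mul 2).exp
  exact (((hZ.const_mul 2).mul (hasDerivAt_exp s)).sub (hY.mul hexp)).congr_deriv (by ring)

end Elementary

section Profile

/-- The profile `φ r = (1 - r) eʳ` of the Bellman function: on the curve `x₂ = x₁² + δ² - r²`, with
`0 ≤ r`, the function `B⁺_δ` is `φ r` times a multiple of `exp x₁`. -/
noncomputable def bellmanProfile (r : ℝ) : ℝ := (1 - r) * exp r

theorem hasDerivAt_bellmanProfile (r : ℝ) : HasDerivAt bellmanProfile (-(r * exp r)) r :=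
  (((hasDerivAt_id r).const_sub 1).mul (hasDerivAt_exp r)).congr_deriv (by simp only [id]; ring)

theorem continuous_bellmanProfile : Continuous bellmanProfile := by
  unfold bellmanProfile; fun_prop

theorem monotoneOn_bellmanProfile : MonotoneOn bellmanProfile (Set.Iic 0) := by
  refine monotoneOn_of_hasDerivWithinAt_nonneg (convex_Iic 0)
    continuous_bellmanProfile.continuousOn
    (fun r _ ↦ (hasDerivAt_bellmanProfile r).hasDerivWithinAt) fun r hr ↦ ?_
  have hr0 : r ≤ 0 := Set.mem_Iic.1 (interior_subset hr)
  exact neg_nonneg.2 (mul_nonpos_of_nonpos_of_nonneg hr0 (exp_pos r).le)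

theorem antitoneOn_bellmanProfile : AntitoneOn bellmanProfile (Set.Ici 0) := by
  refine antitoneOn_of_hasDerivWithinAt_nonpos (convex_Ici 0)
    continuous_bellmanProfile.continuousOn
    (fun r _ ↦ (hasDerivAt_bellmanProfile r).hasDerivWithinAt) fun r hr ↦ ?_
  have hr0 : 0 ≤ r := Set.mem_Ici.1 (interior_subset hr)
  exact neg_nonpos.2 (mul_nonneg hr0 (exp_pos r).le)

theorem hasDerivAt_bellmanProfile_sqrt {f : ℝ → ℝ} {f' s : ℝ} (hf : HasDerivAt f f' s)
    (hs : 0 < f s) :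
    HasDerivAt (fun s ↦ bellmanProfile √(f s)) (-(f' / 2 * exp √(f s))) s := by
  have hne : √(f s) ≠ 0 := (sqrt_pos.2 hs).ne'
  refine ((hasDerivAt_bellmanProfile √(f s)).comp s (hf.sqrt hs.ne')).congr_deriv ?_
  field_simp

/-- This is concavity of `r² ↦ bellmanProfile r`, whose derivative is `-eʳ / 2`. -/
theorem bellmanProfile_le_tangent {s r : ℝ} (hs : 0 ≤ s) (hr : 0 ≤ r) :
    bellmanProfile s ≤ bellmanProfile r - exp r / 2 * (s ^ 2 - r ^ 2) := by
  set h : ℝ → ℝ := fun s ↦ bellmanProfile s + exp r / 2 * s ^ 2 with h_def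
  have hderiv (x : ℝ) : HasDerivAt h (x * (exp r - exp x)) x :=
    ((hasDerivAt_bellmanProfile x).add ((hasDerivAt_sq x).const_mul (exp r / 2))).congr_deriv
      (by ring)
  have hdiff : Differentiable ℝ h := fun x ↦ (hderiv x).differentiableAt
  have hmax : h s ≤ h r := by
    refine isMaxOn_Ici_of_deriv (a := 0) hdiff.continuous.continuousAt hdiff.continuous.continuousAt
      hdiff.differentiableOn hdiff.differentiableOn (fun x hx ↦ ?_) (fun x hx ↦ ?_) hs
    · rw [(hderiv x).deriv]
      exact mul_nonneg hx.1.le (sub_nonneg.2 (exp_le_exp.2 hx.2.le))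
    · rw [(hderiv x).deriv]
      exact mul_nonpos_of_nonneg_of_nonpos (hr.trans (le_of_lt hx))
        (sub_nonpos.2 (exp_le_exp.2 (le_of_lt hx)))
  simp only [h_def] at hmax
  linarith

end Profile

section MidpointInequality

variable {a b c d t τ : ℝ}

theorem bellmanProfile_midpoint_of_le (ha : 0 ≤ a) (hb : 0 ≤ b) (ht : 0 ≤ t) (htc : t ≤ c)
    (habc : a ^ 2 + b ^ 2 = 2 * c ^ 2 + 2 * t ^ 2) :
    bellmanProfile a * exp (-t) + bellmanProfile b * exp t ≤ 2 * bellmanProfile c := by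
  -- `B⁺_δ` is affine on the line through the midpoint tangent to the upper boundary of `Ω_δ`; the
  -- points of this line above or below `x⁻` and `x⁺` have depths `c + t` and `c - t`.
  have htangent_a := mul_le_mul_of_nonneg_right
    (bellmanProfile_le_tangent ha (add_nonneg (ht.trans htc) ht)) (exp_pos (-t)).le
  have htangent_b := mul_le_mul_of_nonneg_right
    (bellmanProfile_le_tangent hb (sub_nonneg.2 htc)) (exp_pos t).le
  have hexp_a : exp (c + t) * exp (-t) = exp c := by rw [← exp_add, add_neg_cancel_right]
  have hexp_b : exp (c - t) * exp t = exp c := by rw [← exp_add, sub_add_cancel]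
  refine (add_le_add htangent_a htangent_b).trans_eq ?_
  simp only [bellmanProfile]
  linear_combination (1 - (c + t) - (a ^ 2 - (c + t) ^ 2) / 2) * hexp_a
    + (1 - (c - t) - (b ^ 2 - (c - t) ^ 2) / 2) * hexp_b - exp c / 2 * habc

theorem quasiconcaveOn_bellmanProfile_sqrt_sub_sq (k K : ℝ) :
    QuasiconcaveOn ℝ (Set.Icc √(K / 2) √K) fun s ↦
      2 * bellmanProfile √(K - s ^ 2) * exp s - k * exp (2 * s) := by
  have hlt {s : ℝ} (hs : s ∈ Set.Ioo √(K / 2) √K) : s ^ 2 < K :=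
    (lt_sqrt ((sqrt_nonneg _).trans hs.1.le)).1 hs.2
  refine quasiconcaveOn_of_hasDerivAt_mul_antitoneOn (w := fun s ↦ 2 * exp (2 * s))
    (h := fun s ↦ bellmanProfile (√(K - s ^ 2) - s) - k) (convex_Icc _ _)
    ?_ ?_ (fun _ _ ↦ by positivity) ?_
  · have := continuous_bellmanProfile
    fun_prop
  · rw [interior_Icc]
    intro s hs
    refine (hasDerivAt_two_mul_exp_sub_mul_exp (hasDerivAt_bellmanProfile_sqrt
      ((hasDerivAt_sq s).const_sub K) (sub_pos.2 (hlt hs)))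
      (hasDerivAt_const s k)).congr_deriv ?_
    have hexp : exp (2 * s) * exp (√(K - s ^ 2) - s) = exp s * exp √(K - s ^ 2) := by
      rw [← exp_add, ← exp_add]; ring_nf
    simp only [bellmanProfile]
    linear_combination (-2 * (1 - (√(K - s ^ 2) - s))) * hexp
  · rw [interior_Icc]
    have hnonpos {s : ℝ} (hs : s ∈ Set.Ioo √(K / 2) √K) : √(K - s ^ 2) - s ≤ 0 := by
      have hs0 : 0 ≤ s := (sqrt_nonneg _).trans hs.1.le
      have := (sqrt_le_left hs0).1 hs.1.le
      exact sub_nonpos.2 ((sqrt_le_left hs0).2 (by linarith))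
    intro u hu v hv huv
    have hu0 : 0 ≤ u := (sqrt_nonneg _).trans hu.1.le
    refine sub_le_sub_right (monotoneOn_bellmanProfile (hnonpos hv) (hnonpos hu) ?_) k
    gcongr

theorem bellmanProfile_midpoint_of_lower_depth (ha : 0 ≤ a) (hb : 0 ≤ b) (hd : 0 ≤ d)
    (hdc : d ≤ c) (hct : c ≤ t) (habc : a ^ 2 + b ^ 2 = 2 * c ^ 2 + 2 * t ^ 2)
    (hlower : bellmanProfile a * exp (-√(c ^ 2 + t ^ 2 - d ^ 2)) +
      bellmanProfile b * exp √(c ^ 2 + t ^ 2 - d ^ 2) ≤ 2 * bellmanProfile d) :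
    bellmanProfile a * exp (-t) + bellmanProfile b * exp t ≤ 2 * bellmanProfile c := by
  have hc : 0 ≤ c := hd.trans hdc
  have hdc2 : d ^ 2 ≤ c ^ 2 := pow_le_pow_left₀ hd hdc 2
  have hct2 : c ^ 2 ≤ t ^ 2 := pow_le_pow_left₀ hc hct 2
  set K := c ^ 2 + t ^ 2
  set p := √(K / 2)
  set q := √(K - d ^ 2)
  have hp0 : 0 ≤ p := sqrt_nonneg _
  have hp2 : p ^ 2 = K / 2 := sq_sqrt (by positivity)
  have hq2 : q ^ 2 = K - d ^ 2 := sq_sqrt (by linarith [sq_nonneg t])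
  have hpt : p ≤ t := sqrt_le_iff.2 ⟨hc.trans hct, by linarith⟩
  have htq : t ≤ q := le_sqrt_of_sq_le (by linarith)
  have hqK : q ≤ √K := sqrt_le_sqrt (by linarith [sq_nonneg d])
  have hiff {s r : ℝ} (hr : 0 ≤ r) (hsr : r ^ 2 = K - s ^ 2) :
      bellmanProfile a * exp (-s) + bellmanProfile b * exp s ≤ 2 * bellmanProfile r ↔
        bellmanProfile a ≤
          2 * bellmanProfile √(K - s ^ 2) * exp s - bellmanProfile b * exp (2 * s) := by
    rw [← hsr, sqrt_sq hr, mul_exp_neg_add_mul_exp_le_iff]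
  have hequal : bellmanProfile a * exp (-p) + bellmanProfile b * exp p ≤ 2 * bellmanProfile p :=
    bellmanProfile_midpoint_of_le ha hb hp0 le_rfl (by linarith)
  refine (hiff hc (by linarith)).2 ?_
  exact le_of_quasiconcaveOn_of_mem_Icc
    (quasiconcaveOn_bellmanProfile_sqrt_sub_sq (bellmanProfile b) K)
    ⟨le_rfl, (hpt.trans htq).trans hqK⟩ ⟨hpt.trans htq, hqK⟩ ⟨hpt, htq⟩
    ((hiff hp0 (by linarith)).1 hequal) ((hiff hd (by linarith)).1 hlower)

theorem monotoneOn_sub_bellmanProfile_sqrt_mul_exp {M p : ℝ} (hd : 0 ≤ d) (hp : 0 ≤ p)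
    (hdp : d ^ 2 ≤ M + 2 * p ^ 2) :
    MonotoneOn (fun s ↦ 2 * bellmanProfile d * exp s
      - bellmanProfile √(M + 2 * s ^ 2) * exp (2 * s)) (Set.Ici p) := by
  refine monotoneOn_of_hasDerivWithinAt_nonneg (convex_Ici p)
    (f' := fun s ↦ 2 * exp s * (bellmanProfile d - bellmanProfile √(M + 2 * s ^ 2) * exp s
      + s * exp s * exp √(M + 2 * s ^ 2))) ?_ ?_ ?_
  · have := continuous_bellmanProfile
    fun_prop
  · rw [interior_Ici]
    intro s (hs : p < s)
    have hpos : 0 < M + 2 * s ^ 2 := by nlinarith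
    refine ((hasDerivAt_two_mul_exp_sub_mul_exp (hasDerivAt_const s (bellmanProfile d))
      (hasDerivAt_bellmanProfile_sqrt (((hasDerivAt_sq s).const_mul 2).const_add M)
        hpos)).congr_deriv ?_).hasDerivWithinAt
    rw [exp_two_mul]
    ring
  · rw [interior_Ici]
    intro s (hs : p < s)
    have hs0 : 0 ≤ s := hp.trans hs.le
    set r := √(M + 2 * s ^ 2)
    have hdr : d ≤ r := le_sqrt_of_sq_le (by nlinarith)
    have hr0 : 0 ≤ r := hd.trans hdr
    have hφ : bellmanProfile r ≤ bellmanProfile d := antitoneOn_bellmanProfile hd hr0 hdr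
    have hφ_exp : bellmanProfile r ≤ exp r := by
      rw [bellmanProfile]; nlinarith [exp_pos r]
    have hexp : exp s - 1 ≤ s * exp s := by
      nlinarith [add_one_le_exp (-s), exp_pos s, exp_mul_exp_neg s]
    have hbound : bellmanProfile r * (exp s - 1) ≤ s * exp s * exp r :=
      calc bellmanProfile r * (exp s - 1) ≤ exp r * (exp s - 1) :=
            mul_le_mul_of_nonneg_right hφ_exp (sub_nonneg.2 (one_le_exp hs0))
        _ ≤ exp r * (s * exp s) := mul_le_mul_of_nonneg_left hexp (exp_pos r).le
        _ = s * exp s * exp r := mul_comm _ _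
    exact mul_nonneg (by positivity) (by linarith)

theorem quasiconcaveOn_sub_bellmanProfile_sqrt {k m : ℝ} (hm : 0 ≤ m) :
    QuasiconcaveOn ℝ (Set.Ici 0) fun s ↦
      2 * k * exp s - k * exp (2 * s) - bellmanProfile √(m + 2 * s ^ 2) := by
  refine quasiconcaveOn_of_hasDerivAt_mul_antitoneOn
    (w := fun s ↦ 2 * exp (3 / 2 * s) * sinh (s / 2))
    (h := fun s ↦ 2 * (exp (√(m + 2 * s ^ 2) - 3 / 2 * s) * (s / 2 / sinh (s / 2)) - k))
    (convex_Ici 0) ?_ ?_ ?_ ?_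
  · have := continuous_bellmanProfile
    fun_prop
  · rw [interior_Ici]
    intro s (hs : 0 < s)
    have hsinh : sinh (s / 2) ≠ 0 := (sinh_pos_iff.2 (half_pos hs)).ne'
    refine ((hasDerivAt_two_mul_exp_sub_mul_exp (hasDerivAt_const s k)
      (hasDerivAt_const s k)).sub (hasDerivAt_bellmanProfile_sqrt
        (((hasDerivAt_sq s).const_mul 2).const_add m) (by positivity))).congr_deriv ?_
    have hexp : exp (3 / 2 * s) = exp s * exp (s / 2) := by rw [← exp_add]; ring_nf
    have hexp_sqrt : exp (3 / 2 * s) * exp (√(m + 2 * s ^ 2) - 3 / 2 * s) =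
        exp √(m + 2 * s ^ 2) := by rw [← exp_add, add_sub_cancel]
    have hdiv : sinh (s / 2) * (s / 2 / sinh (s / 2)) = s / 2 := mul_div_cancel₀ _ hsinh
    rw [exp_two_mul]
    linear_combination (-2 * k * exp s) * exp_sub_one_eq_mul_sinh s - 2 * s * hexp_sqrt
      + 4 * k * sinh (s / 2) * hexp
      - 4 * exp (3 / 2 * s) * exp (√(m + 2 * s ^ 2) - 3 / 2 * s) * hdiv
  · rw [interior_Ici]
    intro s (hs : 0 < s)
    exact mul_nonneg (by positivity) (sinh_nonneg_iff.2 (half_pos hs).le)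
  · rw [interior_Ici]
    intro u (hu : 0 < u) v (hv : 0 < v) huv
    have hsqrt := antitoneOn_sqrt_add_two_mul_sq_sub hm hu.le hv.le huv
    have hsinh := antitoneOn_div_sinh (half_pos hu) (half_pos hv) (by linarith : u / 2 ≤ v / 2)
    have hsinh_v : 0 ≤ v / 2 / sinh (v / 2) :=
      div_nonneg (half_pos hv).le (sinh_nonneg_iff.2 (half_pos hv).le)
    have := mul_le_mul (exp_le_exp.2 hsqrt) hsinh hsinh_v (exp_pos _).le
    beta_reduce
    linarith

theorem bellmanProfile_midpoint_of_upper_right (hd : 0 ≤ d) (ht : t ∈ Set.Icc 0 τ)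
    (hτ : bellmanProfile √(d ^ 2 + 2 * τ ^ 2) ≤
      2 * bellmanProfile d * exp τ - bellmanProfile d * exp (2 * τ)) :
    bellmanProfile √(d ^ 2 + 2 * t ^ 2) ≤
      2 * bellmanProfile d * exp t - bellmanProfile d * exp (2 * t) := by
  refine sub_nonneg.1 (le_of_quasiconcaveOn_of_mem_Icc
    (quasiconcaveOn_sub_bellmanProfile_sqrt (sq_nonneg d)) (Set.mem_Ici.2 le_rfl)
    (Set.mem_Ici.2 (ht.1.trans ht.2)) ht ?_ (sub_nonneg.2 hτ))
  have hzero : d ^ 2 + 2 * 0 ^ 2 = d ^ 2 := by ring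
  simp only [hzero, sqrt_sq hd, mul_zero, exp_zero]
  linarith

theorem bellmanProfile_midpoint_of_upper_midpoint (hd : 0 ≤ d) (hda : d ≤ a) (hdb : d ≤ b)
    (ht : 0 ≤ t) (hτ0 : 0 ≤ τ) (haτ : a ^ 2 ≤ d ^ 2 + 2 * τ ^ 2)
    (habd : a ^ 2 + b ^ 2 = 2 * d ^ 2 + 2 * t ^ 2)
    (hτ : bellmanProfile √(d ^ 2 + 2 * τ ^ 2) ≤
      2 * bellmanProfile d * exp τ - bellmanProfile d * exp (2 * τ)) :
    bellmanProfile a * exp (-t) + bellmanProfile b * exp t ≤ 2 * bellmanProfile d := by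
  have hda2 : d ^ 2 ≤ a ^ 2 := pow_le_pow_left₀ hd hda 2
  have hdb2 : d ^ 2 ≤ b ^ 2 := pow_le_pow_left₀ hd hdb 2
  set p := √((a ^ 2 - d ^ 2) / 2)
  have hp0 : 0 ≤ p := sqrt_nonneg _
  have hp2 : p ^ 2 = (a ^ 2 - d ^ 2) / 2 := sq_sqrt (by linarith)
  have hpt : p ≤ t := sqrt_le_iff.2 ⟨ht, by linarith⟩
  have hpτ : p ≤ τ := sqrt_le_iff.2 ⟨hτ0, by linarith⟩
  have hright (s r : ℝ) (hr : 0 ≤ r) (hsr : r ^ 2 = 2 * d ^ 2 - a ^ 2 + 2 * s ^ 2) :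
      √(2 * d ^ 2 - a ^ 2 + 2 * s ^ 2) = r := by rw [← hsr, sqrt_sq hr]
  have hmono := monotoneOn_sub_bellmanProfile_sqrt_mul_exp (M := 2 * d ^ 2 - a ^ 2) hd hp0
    (by linarith) Set.self_mem_Ici hpt hpt
  simp only [hright p d hd (by linarith), hright t b (hd.trans hdb) (by linarith)] at hmono
  have hleft := bellmanProfile_midpoint_of_upper_right hd ⟨hp0, hpτ⟩ hτ
  rw [show d ^ 2 + 2 * p ^ 2 = a ^ 2 by linarith, sqrt_sq (hd.trans hda)] at hleft
  exact mul_exp_neg_add_mul_exp_le_iff.2 (hleft.trans hmono)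

theorem bellmanProfile_midpoint (hd : 0 ≤ d) (hda : d ≤ a) (hdb : d ≤ b) (hdc : d ≤ c)
    (ht : 0 ≤ t) (hτ0 : 0 ≤ τ) (haτ : a ^ 2 ≤ d ^ 2 + 2 * τ ^ 2)
    (habc : a ^ 2 + b ^ 2 = 2 * c ^ 2 + 2 * t ^ 2)
    (hτ : bellmanProfile √(d ^ 2 + 2 * τ ^ 2) ≤
      2 * bellmanProfile d * exp τ - bellmanProfile d * exp (2 * τ)) :
    bellmanProfile a * exp (-t) + bellmanProfile b * exp t ≤ 2 * bellmanProfile c := by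
  rcases le_total t c with htc | hct
  · exact bellmanProfile_midpoint_of_le (hd.trans hda) (hd.trans hdb) ht htc habc
  have hdc2 : d ^ 2 ≤ c ^ 2 := pow_le_pow_left₀ hd hdc 2
  have hq2 : √(c ^ 2 + t ^ 2 - d ^ 2) ^ 2 = c ^ 2 + t ^ 2 - d ^ 2 :=
    sq_sqrt (by linarith [sq_nonneg t])
  exact bellmanProfile_midpoint_of_lower_depth (hd.trans hda) (hd.trans hdb) hd hdc hct habc
    (bellmanProfile_midpoint_of_upper_midpoint hd hda hdb (sqrt_nonneg _) hτ0 haτ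
      (by linarith) hτ)

end MidpointInequality

section Strip

variable {ε δ : ℝ} {x y : ℝ × ℝ}

/-- The depth of `x` below the upper boundary of `Ω_δ`: the `r ≥ 0` with `x₂ = x₁² + δ² - r²`.
It is the square root of a vertical distance, so that `B⁺_δ` is a function of it and of `x₁`. -/
noncomputable def stripDepth (δ : ℝ) (x : ℝ × ℝ) : ℝ := √(δ ^ 2 + x.1 ^ 2 - x.2)

theorem Bp_eq_exp_mul_bellmanProfile (δ : ℝ) (x : ℝ × ℝ) :
    Bp δ x = exp (x.1 - δ) / (1 - δ) * bellmanProfile (stripDepth δ x) := by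
  rw [Bp, bellmanProfile, stripDepth, add_sub_right_comm x.1, exp_add]
  ring

theorem Omega_subset_Omega (hεδ : ε ^ 2 ≤ δ ^ 2) : Omega ε ⊆ Omega δ :=
  fun _ hx ↦ ⟨hx.1, hx.2.trans (by gcongr)⟩

theorem sq_stripDepth (hx : x ∈ Omega δ) : stripDepth δ x ^ 2 = δ ^ 2 + x.1 ^ 2 - x.2 :=
  sq_sqrt (by linarith [hx.2])

theorem sq_stripDepth_le (hx : x ∈ Omega δ) : stripDepth δ x ^ 2 ≤ δ ^ 2 := by
  linarith [sq_stripDepth hx, hx.1]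

theorem sqrt_le_stripDepth (hx : x ∈ Omega ε) : √(δ ^ 2 - ε ^ 2) ≤ stripDepth δ x :=
  sqrt_le_sqrt (by linarith [hx.2])

theorem sq_stripDepth_add_sq_stripDepth (hx : x ∈ Omega δ) (hy : y ∈ Omega δ)
    (hxy : (1 / 2 : ℝ) • (x + y) ∈ Omega δ) :
    stripDepth δ x ^ 2 + stripDepth δ y ^ 2 =
      2 * stripDepth δ ((1 / 2 : ℝ) • (x + y)) ^ 2 + 2 * ((y.1 - x.1) / 2) ^ 2 := by
  rw [sq_stripDepth hx, sq_stripDepth hy, sq_stripDepth hxy]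
  simp only [Prod.smul_fst, Prod.smul_snd, Prod.fst_add, Prod.snd_add, smul_eq_mul]
  ring

theorem g_eq_bellmanProfile (δ ε : ℝ) :
    g δ ε = exp (-(ε / √2)) * (2 * bellmanProfile √(δ ^ 2 - ε ^ 2) * exp (ε / √2)
      - bellmanProfile √(δ ^ 2 - ε ^ 2) * exp (2 * (ε / √2)) - bellmanProfile δ) := by
  rw [g, sub_eq_add_neg δ, exp_add, exp_two_mul]
  simp only [bellmanProfile]
  linear_combination (-(1 - √(δ ^ 2 - ε ^ 2)) * exp √(δ ^ 2 - ε ^ 2) * (2 - exp (ε / √2))) *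
    exp_mul_exp_neg (ε / √2)

theorem bellmanProfile_le_of_g_nonneg (hg : 0 ≤ g δ ε) :
    bellmanProfile δ ≤ 2 * bellmanProfile √(δ ^ 2 - ε ^ 2) * exp (ε / √2)
      - bellmanProfile √(δ ^ 2 - ε ^ 2) * exp (2 * (ε / √2)) := by
  rw [g_eq_bellmanProfile] at hg
  exact sub_nonneg.1 (nonneg_of_mul_nonneg_right hg (exp_pos _))

theorem bellmanProfile_stripDepth_midpoint (hε : 0 ≤ ε) (hεδ : ε ≤ δ) (hg : 0 ≤ g δ ε)
    (hx : x ∈ Omega ε) (hy : y ∈ Omega ε) (hxy : (1 / 2 : ℝ) • (x + y) ∈ Omega ε)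
    (hle : x.1 ≤ y.1) :
    bellmanProfile (stripDepth δ x) * exp (-((y.1 - x.1) / 2)) +
        bellmanProfile (stripDepth δ y) * exp ((y.1 - x.1) / 2) ≤
      2 * bellmanProfile (stripDepth δ ((1 / 2 : ℝ) • (x + y))) := by
  have hsq : ε ^ 2 ≤ δ ^ 2 := pow_le_pow_left₀ hε hεδ 2
  have hsub := Omega_subset_Omega hsq
  have hδ_sq : √(δ ^ 2 - ε ^ 2) ^ 2 + 2 * (ε / √2) ^ 2 = δ ^ 2 := by
    rw [sq_sqrt (sub_nonneg.2 hsq), div_pow, sq_sqrt zero_le_two]; ring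
  have hτ : bellmanProfile √(√(δ ^ 2 - ε ^ 2) ^ 2 + 2 * (ε / √2) ^ 2) ≤
      2 * bellmanProfile √(δ ^ 2 - ε ^ 2) * exp (ε / √2)
        - bellmanProfile √(δ ^ 2 - ε ^ 2) * exp (2 * (ε / √2)) := by
    rw [hδ_sq, sqrt_sq (hε.trans hεδ)]
    exact bellmanProfile_le_of_g_nonneg hg
  exact bellmanProfile_midpoint (sqrt_nonneg _) (sqrt_le_stripDepth hx) (sqrt_le_stripDepth hy)
    (sqrt_le_stripDepth hxy) (by linarith) (by positivity)
    ((sq_stripDepth_le (hsub hx)).trans_eq hδ_sq.symm)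
    (sq_stripDepth_add_sq_stripDepth (hsub hx) (hsub hy) (hsub hxy)) hτ

end Strip

theorem stmt18_general (ε δ : ℝ) (hε : 0 ≤ ε) (hδ : δ ∈ Set.Ioo ε 1) (hg : 0 ≤ g δ ε)
    (xm xp : ℝ × ℝ) (hm : xm ∈ Omega ε) (hp : xp ∈ Omega ε)
    (hmid : (1 / 2 : ℝ) • (xm + xp) ∈ Omega ε) :
    (1 / 2) * Bp δ xm + (1 / 2) * Bp δ xp ≤ Bp δ ((1 / 2 : ℝ) • (xm + xp)) := by
  wlog hle : xm.1 ≤ xp.1 generalizing xm xp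
  · rw [add_comm xm xp] at hmid ⊢
    linarith [this xp xm hp hm hmid (le_of_not_ge hle)]
  have key := bellmanProfile_stripDepth_midpoint hε hδ.1.le hg hm hp hmid hle
  set x₀ := (1 / 2 : ℝ) • (xm + xp)
  have hx₀ : x₀.1 = (xm.1 + xp.1) / 2 := by simp [x₀]; ring
  have hweight : 0 ≤ exp (x₀.1 - δ) / (1 - δ) :=
    div_nonneg (exp_pos _).le (sub_nonneg.2 hδ.2.le)
  have hexp_m : exp (xm.1 - δ) = exp (x₀.1 - δ) * exp (-((xp.1 - xm.1) / 2)) := by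
    rw [← exp_add, hx₀]; ring_nf
  have hexp_p : exp (xp.1 - δ) = exp (x₀.1 - δ) * exp ((xp.1 - xm.1) / 2) := by
    rw [← exp_add, hx₀]; ring_nf
  simp only [Bp_eq_exp_mul_bellmanProfile, hexp_m, hexp_p]
  linear_combination (1 / 2) * mul_le_mul_of_nonneg_left key hweight

/-- Dyadic midpoint concavity of `B⁺_δ` over `Ω_ε`, where `δ ∈ (ε,1)` solves
`g(δ,ε) = 0`. -/
theorem stmt18 (ε δ : ℝ) (hε0 : 0 < ε) (hε1 : ε < Real.sqrt 2 * Real.log 2)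
    (hδ : δ ∈ Set.Ioo ε 1) (hg : g δ ε = 0)
    (xm xp : ℝ × ℝ) (hm : xm ∈ Omega ε) (hp : xp ∈ Omega ε)
    (hmid : (1 / 2 : ℝ) • (xm + xp) ∈ Omega ε) :
    (1 / 2) * Bp δ xm + (1 / 2) * Bp δ xp ≤ Bp δ ((1 / 2 : ℝ) • (xm + xp)) :=
  stmt18_general ε δ hε0.le hδ hg.ge xm xp hm hp hmid
end

section
/- Let 0 < ε < √2·log 2 and let δ ∈ (ε, 1) satisfy g(δ, ε) = 0. Then for every φ ∈ BMO^d_ε([0,1]), the function e^φ is integrable on [0,1] and ∫₀¹ e^φ ≤ B⁺_δ(∫₀¹ φ, ∫₀¹ φ²). -/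
open MeasureTheory Real

/-- The average of `φ` over the interval with endpoints `a`, `b`. -/
noncomputable def avg (φ : ℝ → ℝ) (a b : ℝ) : ℝ := (∫ t in a..b, φ t) / (b - a)

/-- `φ ∈ BMO_ε([a,b])`: `φ` and `φ²` are integrable on `[a,b]` and the mean
oscillation `⟨φ²⟩_J − ⟨φ⟩_J²` is at most `ε²` on every nondegenerate
subinterval `J = [c,d] ⊆ [a,b]`. -/
def BMOe (ε a b : ℝ) (φ : ℝ → ℝ) : Prop :=
  IntervalIntegrable φ volume a b ∧
  IntervalIntegrable (fun t => (φ t) ^ 2) volume a b ∧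
  ∀ c d : ℝ, a ≤ c → c < d → d ≤ b →
    avg (fun t => (φ t) ^ 2) c d - (avg φ c d) ^ 2 ≤ ε ^ 2
/-- `φ ∈ BMO^d_ε([0,1])`: `φ` and `φ²` are integrable on `[0,1]` and the mean
oscillation is at most `ε²` on every dyadic subinterval
`[k/2^n, (k+1)/2^n]` of `[0,1]`. -/
def BMOd (ε : ℝ) (φ : ℝ → ℝ) : Prop :=
  IntervalIntegrable φ volume 0 1 ∧
  IntervalIntegrable (fun t => (φ t) ^ 2) volume 0 1 ∧
  ∀ n k : ℕ, k < 2 ^ n →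
    avg (fun t => (φ t) ^ 2) ((k : ℝ) / 2 ^ n) (((k : ℝ) + 1) / 2 ^ n)
      - (avg φ ((k : ℝ) / 2 ^ n) (((k : ℝ) + 1) / 2 ^ n)) ^ 2 ≤ ε ^ 2
/-!
Since `B⁺_δ` majorises `e^{x₁}`, Bellman induction over the dyadic tree bounds the integral of
`exp` of every dyadic averaging of `φ` by `B⁺_δ(∫ φ, ∫ φ²)`, as soon as `B⁺_δ` is midpoint concave
along segments with endpoints and midpoint in `Ω_ε`; Lebesgue differentiation and Fatou's lemma then
pass to `φ` itself.

Midpoint concavity is an inequality on a three-parameter family of segments. For short segments it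
is a tangent-line inequality. Otherwise, along suitable one-parameter deformations the concavity
defect, multiplied by a positive function, is monotone or first increases and then decreases, so its
sign is decided at the ends. This leaves a single extremal segment: the midpoint and one endpoint
lie on the upper boundary of `Ω_ε`, the other endpoint on the lower one. Its defect is `g(δ, ε)` up
to a positive factor.
-/

section Profile

/-- The profile `s ↦ (1 - s) eˢ` of the upper Bellman function: up to a constant factor,
`B⁺_δ(x) = e^{x₁} profile (√(δ² + x₁² - x₂))`. -/
noncomputable def profile (s : ℝ) : ℝ := (1 - s) * exp s

lemma hasDerivAt_exp_neg (x : ℝ) : HasDerivAt (fun x ↦ exp (-x)) (-exp (-x)) x := by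
  simpa using (hasDerivAt_neg x).exp

@[fun_prop]
lemma continuous_profile : Continuous profile := by
  unfold profile
  fun_prop

lemma hasDerivAt_profile (s : ℝ) : HasDerivAt profile (-(s * exp s)) s := by
  refine (((hasDerivAt_id' s).const_sub 1).mul (Real.hasDerivAt_exp s)).congr_deriv ?_
  ring

lemma antitoneOn_profile : AntitoneOn profile (Set.Ici 0) := by
  refine antitoneOn_of_hasDerivWithinAt_nonpos (convex_Ici 0) continuous_profile.continuousOn
    (fun s _ ↦ (hasDerivAt_profile s).hasDerivWithinAt) fun s hs ↦ ?_
  have hs : 0 < s := by simpa using hs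
  exact neg_nonpos.2 (by positivity)

lemma monotoneOn_profile : MonotoneOn profile (Set.Iic 0) := by
  refine monotoneOn_of_hasDerivWithinAt_nonneg (convex_Iic 0) continuous_profile.continuousOn
    (fun s _ ↦ (hasDerivAt_profile s).hasDerivWithinAt) fun s hs ↦ ?_
  have hs : s < 0 := by simpa using hs
  exact neg_nonneg.2 (mul_nonpos_of_nonpos_of_nonneg hs.le (exp_pos s).le)

lemma hasDerivAt_profile_sqrt {q : ℝ → ℝ} {q' x : ℝ} (hq : HasDerivAt q q' x) (hpos : 0 < q x) :
    HasDerivAt (fun x ↦ profile √(q x)) (-(exp √(q x) / 2) * q') x := by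
  refine ((hasDerivAt_profile √(q x)).comp x (hq.sqrt hpos.ne')).congr_deriv ?_
  have := Real.sqrt_pos.2 hpos
  field_simp

-- The tangent line at `u ^ 2` to the concave function `v ↦ profile √v`.
lemma profile_le_sub_exp_mul_sq_sub_sq {s u : ℝ} (hs : 0 ≤ s) (hu : 0 ≤ u) :
    profile s ≤ profile u - exp u * (s ^ 2 - u ^ 2) / 2 := by
  set F : ℝ → ℝ := fun x ↦ profile x + exp u * x ^ 2 / 2 with hF
  have hcont : Continuous F := by fun_prop
  have hderiv (x : ℝ) : HasDerivAt F (x * (exp u - exp x)) x := by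
    refine ((hasDerivAt_profile x).add
      (((hasDerivAt_pow 2 x).const_mul (exp u)).div_const 2)).congr_deriv ?_
    push_cast
    ring
  suffices F s ≤ F u by simp only [hF] at this; linarith
  rcases le_total s u with hsu | hus
  · refine monotoneOn_of_hasDerivWithinAt_nonneg (convex_Icc 0 u) hcont.continuousOn
      (fun x _ ↦ (hderiv x).hasDerivWithinAt) (fun x hx ↦ ?_) ⟨hs, hsu⟩ ⟨hu, le_rfl⟩ hsu
    rw [interior_Icc] at hx
    exact mul_nonneg hx.1.le (sub_nonneg.2 (exp_le_exp.2 hx.2.le))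
  · refine antitoneOn_of_hasDerivWithinAt_nonpos (convex_Ici u) hcont.continuousOn
      (fun x _ ↦ (hderiv x).hasDerivWithinAt) (fun x hx ↦ ?_) Set.self_mem_Ici hus hus
    have hx : u < x := by simpa using hx
    exact mul_nonpos_of_nonneg_of_nonpos (hu.trans hx.le) (sub_nonpos.2 (exp_le_exp.2 hx.le))

end Profile

lemma min_endpoints_le_of_deriv_unimodal {F F' : ℝ → ℝ} {l r c : ℝ}
    (hcont : ContinuousOn F (Set.Icc l r)) (hderiv : ∀ x ∈ Set.Ioo l r, HasDerivAt F (F' x) x)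
    (hsign : ∀ x ∈ Set.Ioo l r, ∀ y ∈ Set.Ioo l r, x < y → F' x < 0 → F' y ≤ 0)
    (hc : c ∈ Set.Icc l r) : min (F l) (F r) ≤ F c := by
  by_contra! hlt
  obtain ⟨hFl, hFr⟩ := lt_min_iff.1 hlt
  have hlc : l < c := hc.1.lt_of_ne (by rintro rfl; exact hFl.false)
  have hcr : c < r := hc.2.lt_of_ne (by rintro rfl; exact hFr.false)
  obtain ⟨x, hx, hxF⟩ := exists_hasDerivAt_eq_slope F F' hlc
    (hcont.mono (Set.Icc_subset_Icc_right hc.2)) fun z hz ↦ hderiv z ⟨hz.1, hz.2.trans hcr⟩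
  obtain ⟨y, hy, hyF⟩ := exists_hasDerivAt_eq_slope F F' hcr
    (hcont.mono (Set.Icc_subset_Icc_left hc.1)) fun z hz ↦ hderiv z ⟨hlc.trans hz.1, hz.2⟩
  have hx_neg : F' x < 0 := hxF ▸ div_neg_of_neg_of_pos (sub_neg.2 hFl) (sub_pos.2 hlc)
  have hy_pos : 0 < F' y := hyF ▸ div_pos (sub_pos.2 hFr) (sub_pos.2 hcr)
  exact hy_pos.not_ge
    (hsign x ⟨hx.1, hx.2.trans hcr⟩ y ⟨hlc.trans hy.1, hy.2⟩ (hx.2.trans hy.1) hx_neg)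

section MidpointGap

/-- Up to a positive factor, `2 B⁺_δ(x) - B⁺_δ(y) - B⁺_δ(z)` for the midpoint `x` of `y` and `z`:
here `a = (y₁ - z₁) / 2`, and `s`, `p`, `m` are the values of `√(δ² + x₁² - x₂)` at `x`, `y`, `z`.
That `x` is the midpoint amounts to `2 s² + 2 a² = p² + m²`. -/
noncomputable def midpointGap (a s p m : ℝ) : ℝ :=
  2 * profile s - (exp a * profile p + exp (-a) * profile m)

lemma g_eq_midpointGap (δ ε : ℝ) :
    g δ ε = midpointGap (ε / √2) √(δ ^ 2 - ε ^ 2) √(δ ^ 2 - ε ^ 2) δ := by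
  simp only [g, midpointGap, profile, sub_eq_add_neg δ, exp_add]
  ring

variable {σ r a s p m : ℝ}

-- Adding the tangent-line inequalities at `s - a` and `s + a` gives exactly the claim.
lemma midpointGap_nonneg_of_le (ha : 0 ≤ a) (has : a ≤ s) (hp : 0 ≤ p) (hm : 0 ≤ m)
    (heq : 2 * s ^ 2 + 2 * a ^ 2 = p ^ 2 + m ^ 2) : 0 ≤ midpointGap a s p m := by
  have hp_tangent := mul_le_mul_of_nonneg_left
    (profile_le_sub_exp_mul_sq_sub_sq hp (sub_nonneg.2 has)) (exp_pos a).le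
  have hm_tangent := mul_le_mul_of_nonneg_left
    (profile_le_sub_exp_mul_sq_sub_sq hm (by linarith : 0 ≤ s + a)) (exp_pos (-a)).le
  have hexp_p : exp a * exp (s - a) = exp s := by rw [← exp_add]; congr 1; ring
  have hexp_m : exp (-a) * exp (s + a) = exp s := by rw [← exp_add]; congr 1; ring
  unfold midpointGap
  suffices exp a * (profile (s - a) - exp (s - a) * (p ^ 2 - (s - a) ^ 2) / 2) +
      exp (-a) * (profile (s + a) - exp (s + a) * (m ^ 2 - (s + a) ^ 2) / 2) =
      2 * profile s by linarith
  unfold profile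
  linear_combination (1 - (s - a) - (p ^ 2 - (s - a) ^ 2) / 2) * hexp_p +
    (1 - (s + a) - (m ^ 2 - (s + a) ^ 2) / 2) * hexp_m + exp s / 2 * heq

lemma midpointGap_le_of_spread {p' m' : ℝ} (hp' : 0 ≤ p') (hpp : p' ≤ p) (hm : 0 ≤ m)
    (hm' : 0 ≤ m') (heq : p' ^ 2 + m' ^ 2 = p ^ 2 + m ^ 2) (hle : m' ≤ p' + 2 * a) :
    midpointGap a s p' m' ≤ midpointGap a s p m := by
  have hp_tangent := mul_le_mul_of_nonneg_left
    (profile_le_sub_exp_mul_sq_sub_sq (hp'.trans hpp) hp') (exp_pos a).le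
  have hm_tangent := mul_le_mul_of_nonneg_left
    (profile_le_sub_exp_mul_sq_sub_sq hm hm') (exp_pos (-a)).le
  have hexp : exp (-a) * exp m' ≤ exp a * exp p' := by
    rw [← exp_add, ← exp_add]
    exact exp_le_exp.2 (by linarith)
  have hsq : 0 ≤ p ^ 2 - p' ^ 2 := by nlinarith
  rw [show m ^ 2 - m' ^ 2 = -(p ^ 2 - p' ^ 2) by linarith] at hm_tangent
  unfold midpointGap
  linarith [mul_le_mul_of_nonneg_right hexp hsq]

lemma hasDerivAt_exp_mul_midpointGap {R x : ℝ} (hx : 0 < R - x ^ 2) :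
    HasDerivAt (fun x ↦ exp x * midpointGap x √(R - x ^ 2) p m)
      (2 * exp (2 * x) * (profile (√(R - x ^ 2) - x) - profile p)) x := by
  have hq : HasDerivAt (fun x ↦ R - x ^ 2) (-(2 * x)) x := by
    simpa using (hasDerivAt_pow 2 x).const_sub R
  have hgap : HasDerivAt (fun x ↦ midpointGap x √(R - x ^ 2) p m)
      (2 * (-(exp √(R - x ^ 2) / 2) * -(2 * x)) - (exp x * profile p + -exp (-x) * profile m)) x :=
    ((hasDerivAt_profile_sqrt hq hx).const_mul 2).sub
      (((Real.hasDerivAt_exp x).mul_const _).add ((hasDerivAt_exp_neg x).mul_const _))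
  refine ((Real.hasDerivAt_exp x).mul hgap).congr_deriv ?_
  have hexp_shift : exp (2 * x) * exp (√(R - x ^ 2) - x) = exp x * exp √(R - x ^ 2) := by
    rw [← exp_add, ← exp_add]; congr 1; ring
  have hexp_sq : exp (2 * x) = exp x * exp x := by rw [← exp_add, two_mul]
  unfold midpointGap profile
  linear_combination -2 * (1 - (√(R - x ^ 2) - x)) * hexp_shift +
    2 * (1 - p) * exp p * hexp_sq

-- With `p` and `m` fixed, `exp a * midpointGap a s p m` is unimodal in `a`. Increasing `a` up to
-- `r` decreases `s` down to `σ`; decreasing `a` leads to `a = s`.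
lemma midpointGap_nonneg_of_endpoint (hσ : 0 ≤ σ) (hσs : σ ≤ s) (hsa : s ≤ a) (hr : 0 ≤ r)
    (hp : 0 ≤ p) (hm : 0 ≤ m) (heq : 2 * s ^ 2 + 2 * a ^ 2 = p ^ 2 + m ^ 2)
    (hend : 2 * σ ^ 2 + 2 * r ^ 2 = p ^ 2 + m ^ 2) (hgap : 0 ≤ midpointGap r σ p m) :
    0 ≤ midpointGap a s p m := by
  have ha : 0 ≤ a := (hσ.trans hσs).trans hsa
  set R := (p ^ 2 + m ^ 2) / 2 with hR
  set F : ℝ → ℝ := fun x ↦ exp x * midpointGap x √(R - x ^ 2) p m with hF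
  have hF_eq (x y : ℝ) (hy : 0 ≤ y) (hxy : R - x ^ 2 = y ^ 2) :
      F x = exp x * midpointGap x y p m := by
    simp only [hF, hxy, sqrt_sq hy]
  set l := √(R / 2)
  have hl : 0 ≤ l := Real.sqrt_nonneg _
  have hl_sq : l ^ 2 = R / 2 := sq_sqrt (by positivity)
  have hla : l ≤ a := le_of_sq_le_sq (by nlinarith) ha
  have har : a ≤ r := le_of_sq_le_sq (by nlinarith) hr
  have hmin : min (F l) (F r) ≤ F a := by
    refine min_endpoints_le_of_deriv_unimodal (by unfold F midpointGap; fun_prop)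
      (fun x hx ↦ hasDerivAt_exp_mul_midpointGap (by nlinarith [hx.1, hx.2]))
      (fun x hx y _ hxy hneg ↦ ?_) ⟨hla, har⟩
    have hx_le : √(R - x ^ 2) ≤ x := sqrt_le_iff.2 ⟨hl.trans hx.1.le, by nlinarith [hx.1]⟩
    have hxy_sqrt : √(R - y ^ 2) ≤ √(R - x ^ 2) := sqrt_le_sqrt (by nlinarith [hx.1])
    have hx_profile := neg_of_mul_neg_right hneg (by positivity)
    have hxy_profile : profile (√(R - y ^ 2) - y) ≤ profile (√(R - x ^ 2) - x) :=
      monotoneOn_profile (Set.mem_Iic.2 (by linarith)) (Set.mem_Iic.2 (by linarith)) (by linarith)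
    exact mul_nonpos_of_nonneg_of_nonpos (by positivity) (by linarith)
  have hleft : 0 ≤ F l := by
    rw [hF_eq l l hl (by linarith)]
    exact mul_nonneg (exp_pos _).le (midpointGap_nonneg_of_le hl le_rfl hp hm (by linarith))
  have hright : 0 ≤ F r := by
    rw [hF_eq r σ hσ (by linarith)]
    exact mul_nonneg (exp_pos r).le hgap
  have hFa := (le_min hleft hright).trans hmin
  rw [hF_eq a s (hσ.trans hσs) (by linarith)] at hFa
  exact nonneg_of_mul_nonneg_right hFa (exp_pos a)

lemma hasDerivAt_midpointGap_self {x : ℝ} (hx : x ≠ 0) :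
    HasDerivAt (fun x ↦ midpointGap x σ σ √(σ ^ 2 + 2 * x ^ 2))
      (exp x * (profile (√(σ ^ 2 + 2 * x ^ 2) - 2 * x) - profile σ)) x := by
  have hq : HasDerivAt (fun x ↦ σ ^ 2 + 2 * x ^ 2) (2 * (2 * x)) x := by
    simpa using ((hasDerivAt_pow 2 x).const_mul 2).const_add (σ ^ 2)
  refine (((Real.hasDerivAt_exp x).mul_const (profile σ)).add ((hasDerivAt_exp_neg x).mul
    (hasDerivAt_profile_sqrt hq (by positivity)))).const_sub (2 * profile σ)
    |>.congr_deriv ?_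
  have hexp : exp x * exp (√(σ ^ 2 + 2 * x ^ 2) - 2 * x) =
      exp (-x) * exp √(σ ^ 2 + 2 * x ^ 2) := by
    rw [← exp_add, ← exp_add]; congr 1; ring
  unfold profile
  linear_combination -(1 - (√(σ ^ 2 + 2 * x ^ 2) - 2 * x)) * hexp

lemma midpointGap_self_nonneg (hσ : 0 ≤ σ) (ha : 0 ≤ a) (har : a ≤ r)
    (hgap : 0 ≤ midpointGap r σ σ √(σ ^ 2 + 2 * r ^ 2)) :
    0 ≤ midpointGap a σ σ √(σ ^ 2 + 2 * a ^ 2) := by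
  set w : ℝ → ℝ := fun x ↦ √(σ ^ 2 + 2 * x ^ 2) with hw
  have hw_sq (x : ℝ) : w x ^ 2 = σ ^ 2 + 2 * x ^ 2 := sq_sqrt (by positivity)
  have hw_nonneg (x : ℝ) : 0 ≤ w x := Real.sqrt_nonneg _
  have hmin : min (midpointGap 0 σ σ (w 0)) (midpointGap r σ σ (w r)) ≤
      midpointGap a σ σ (w a) := by
    refine min_endpoints_le_of_deriv_unimodal (F := fun x ↦ midpointGap x σ σ (w x))
      (by unfold midpointGap; fun_prop) (fun x hx ↦ hasDerivAt_midpointGap_self hx.1.ne')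
      (fun x hx y _ hxy hneg ↦ ?_) ⟨ha, har⟩
    have hx_pos := hx.1
    have hx_le : x ≤ w x := le_of_sq_le_sq (by nlinarith [hw_sq x]) (hw_nonneg x)
    have hwx : w x ≤ σ + 2 * x :=
      le_of_sq_le_sq (by nlinarith [hw_sq x]) (by positivity)
    have hx_profile := neg_of_mul_neg_right hneg (exp_pos x).le
    have hx_neg : w x - 2 * x < 0 := by
      by_contra! hnonneg
      linarith [antitoneOn_profile hnonneg hσ (by linarith)]
    have hwxy : w y ≤ w x + 2 * (y - x) :=
      le_of_sq_le_sq (by nlinarith [hw_sq x, hw_sq y]) (by linarith [hw_nonneg x])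
    have hxy_profile : profile (w y - 2 * y) ≤ profile (w x - 2 * x) :=
      monotoneOn_profile (Set.mem_Iic.2 (by linarith)) hx_neg.le (by linarith)
    exact mul_nonpos_of_nonneg_of_nonpos (exp_pos y).le (by linarith)
  have hzero : midpointGap 0 σ σ (w 0) = 0 := by
    simp only [midpointGap, hw, neg_zero, exp_zero, ne_eq, OfNat.ofNat_ne_zero, not_false_eq_true,
      zero_pow, mul_zero, add_zero, sqrt_sq hσ]
    ring
  exact (le_min hzero.ge hgap).trans hmin

lemma hasDerivAt_midpointGap_right_const {x : ℝ} (hx : 0 < σ ^ 2 + 2 * (x ^ 2 - r ^ 2)) :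
    HasDerivAt (fun x ↦ midpointGap x s √(σ ^ 2 + 2 * (x ^ 2 - r ^ 2)) m)
      (exp (-x) * (profile m - profile (√(σ ^ 2 + 2 * (x ^ 2 - r ^ 2)) + 2 * x))) x := by
  have hq : HasDerivAt (fun x ↦ σ ^ 2 + 2 * (x ^ 2 - r ^ 2)) (2 * (2 * x)) x := by
    simpa using (((hasDerivAt_pow 2 x).sub_const (r ^ 2)).const_mul 2).const_add (σ ^ 2)
  refine (((Real.hasDerivAt_exp x).mul (hasDerivAt_profile_sqrt hq hx)).add
    ((hasDerivAt_exp_neg x).mul_const (profile m))).const_sub (2 * profile s) |>.congr_deriv ?_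
  have hexp : exp (-x) * exp (√(σ ^ 2 + 2 * (x ^ 2 - r ^ 2)) + 2 * x) =
      exp x * exp √(σ ^ 2 + 2 * (x ^ 2 - r ^ 2)) := by
    rw [← exp_add, ← exp_add]; congr 1; ring
  unfold profile
  linear_combination (1 - (√(σ ^ 2 + 2 * (x ^ 2 - r ^ 2)) + 2 * x)) * hexp

lemma monotoneOn_midpointGap_right_const (hσ : 0 ≤ σ) (hr : 0 ≤ r) :
    MonotoneOn (fun x ↦ midpointGap x s √(σ ^ 2 + 2 * (x ^ 2 - r ^ 2)) √(σ ^ 2 + 2 * r ^ 2))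
      (Set.Ici r) := by
  refine monotoneOn_of_hasDerivWithinAt_nonneg
    (f' := fun x ↦ exp (-x) * (profile √(σ ^ 2 + 2 * r ^ 2) -
      profile (√(σ ^ 2 + 2 * (x ^ 2 - r ^ 2)) + 2 * x)))
    (convex_Ici r) (by unfold midpointGap; fun_prop) (fun x hx ↦ ?_) fun x hx ↦ ?_
  all_goals have hrx : r < x := by simpa using hx
  · exact (hasDerivAt_midpointGap_right_const (by nlinarith)).hasDerivWithinAt
  · have hσ_le : σ ≤ √(σ ^ 2 + 2 * (x ^ 2 - r ^ 2)) := le_sqrt_of_sq_le (by nlinarith)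
    have hm_le : √(σ ^ 2 + 2 * r ^ 2) ≤ σ + 2 * x := sqrt_le_iff.2 ⟨by linarith, by nlinarith⟩
    exact mul_nonneg (exp_pos _).le (sub_nonneg.2 (antitoneOn_profile (Real.sqrt_nonneg _)
      (Set.mem_Ici.2 (by linarith)) (by linarith)))

lemma midpointGap_nonneg_of_upper_boundary (hσ : 0 ≤ σ) (hr : 0 ≤ r) (ha : 0 ≤ a) (hσp : σ ≤ p)
    (hm : 0 ≤ m) (hmr : m ^ 2 ≤ σ ^ 2 + 2 * r ^ 2)
    (heq : 2 * σ ^ 2 + 2 * a ^ 2 = p ^ 2 + m ^ 2)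
    (hgap : 0 ≤ midpointGap r σ σ √(σ ^ 2 + 2 * r ^ 2)) : 0 ≤ midpointGap a σ p m := by
  rcases le_total a r with har | hra
  · have hsq : √(σ ^ 2 + 2 * a ^ 2) ^ 2 = σ ^ 2 + 2 * a ^ 2 := sq_sqrt (by positivity)
    refine (midpointGap_self_nonneg hσ ha har hgap).trans
      (midpointGap_le_of_spread hσ hσp hm (Real.sqrt_nonneg _) (by linarith) ?_)
    exact sqrt_le_iff.2 ⟨by positivity, by nlinarith [mul_nonneg hσ ha]⟩
  · have hra_sq : r ^ 2 ≤ a ^ 2 := by gcongr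
    have hp'_sq : √(σ ^ 2 + 2 * (a ^ 2 - r ^ 2)) ^ 2 = σ ^ 2 + 2 * (a ^ 2 - r ^ 2) :=
      sq_sqrt (by nlinarith)
    have hm'_sq : √(σ ^ 2 + 2 * r ^ 2) ^ 2 = σ ^ 2 + 2 * r ^ 2 := sq_sqrt (by positivity)
    have hσp' : σ ≤ √(σ ^ 2 + 2 * (a ^ 2 - r ^ 2)) := le_sqrt_of_sq_le (by linarith)
    have hcorner := monotoneOn_midpointGap_right_const (s := σ) hσ hr Set.self_mem_Ici hra hra
    simp only [sub_self, mul_zero, add_zero, sqrt_sq hσ] at hcorner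
    refine (hgap.trans hcorner).trans (midpointGap_le_of_spread (Real.sqrt_nonneg _)
      (sqrt_le_iff.2 ⟨hσ.trans hσp, by linarith⟩) hm (Real.sqrt_nonneg _) (by linarith) ?_)
    exact sqrt_le_iff.2 ⟨by linarith, by nlinarith [mul_nonneg hσ ha]⟩

theorem midpointGap_nonneg (hσ : 0 ≤ σ) (hr : 0 ≤ r) (ha : 0 ≤ a) (hσs : σ ≤ s) (hσp : σ ≤ p)
    (hm : 0 ≤ m) (hmr : m ^ 2 ≤ σ ^ 2 + 2 * r ^ 2) (heq : 2 * s ^ 2 + 2 * a ^ 2 = p ^ 2 + m ^ 2)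
    (hgap : 0 ≤ midpointGap r σ σ √(σ ^ 2 + 2 * r ^ 2)) : 0 ≤ midpointGap a s p m := by
  rcases le_total a s with has | hsa
  · exact midpointGap_nonneg_of_le ha has (hσ.trans hσp) hm heq
  set b := √((p ^ 2 + m ^ 2) / 2 - σ ^ 2)
  have hb_sq : b ^ 2 = (p ^ 2 + m ^ 2) / 2 - σ ^ 2 := sq_sqrt (by nlinarith)
  exact midpointGap_nonneg_of_endpoint hσ hσs hsa (Real.sqrt_nonneg _) (hσ.trans hσp) hm heq
    (by linarith)
    (midpointGap_nonneg_of_upper_boundary hσ hr (Real.sqrt_nonneg _) hσp hm hmr (by linarith) hgap)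

end MidpointGap

section UpperBellmanFunction

/-- `B` is midpoint concave on `s`, where `s` itself need not be convex: only pairs of points of `s`
whose midpoint is again in `s` are tested. -/
def MidpointConcaveOn {E : Type*} [AddCommGroup E] [Module ℝ E] (s : Set E) (B : E → ℝ) : Prop :=
  ∀ ⦃y⦄, y ∈ s → ∀ ⦃z⦄, z ∈ s → midpoint ℝ y z ∈ s → B y + B z ≤ 2 * B (midpoint ℝ y z)

variable {δ ε : ℝ} {x y z : ℝ × ℝ}

lemma Bp_eq_mul_profile (δ : ℝ) (x : ℝ × ℝ) :
    Bp δ x = exp (x.1 - δ) / (1 - δ) * profile √(δ ^ 2 + x.1 ^ 2 - x.2) := by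
  rw [Bp, profile, add_sub_right_comm x.1, exp_add]
  ring

lemma exp_le_Bp (hδ0 : 0 ≤ δ) (hδ1 : δ < 1) (hx : x.1 ^ 2 ≤ x.2) : exp x.1 ≤ Bp δ x := by
  have hδ : 0 < 1 - δ := sub_pos.2 hδ1
  have hsqrt : √(δ ^ 2 + x.1 ^ 2 - x.2) ≤ δ := sqrt_le_iff.2 ⟨hδ0, by linarith⟩
  calc exp x.1 = exp (x.1 - δ) / (1 - δ) * profile δ := by
        rw [profile, exp_sub]
        field_simp
    _ ≤ exp (x.1 - δ) / (1 - δ) * profile √(δ ^ 2 + x.1 ^ 2 - x.2) :=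
        mul_le_mul_of_nonneg_left (antitoneOn_profile (Real.sqrt_nonneg _) hδ0 hsqrt)
          (by positivity)
    _ = Bp δ x := (Bp_eq_mul_profile δ x).symm

lemma two_mul_Bp_sub_Bp_add_Bp (h : y.1 + z.1 = 2 * x.1) :
    2 * Bp δ x - (Bp δ y + Bp δ z) = exp (x.1 - δ) / (1 - δ) *
      midpointGap ((y.1 - z.1) / 2) √(δ ^ 2 + x.1 ^ 2 - x.2) √(δ ^ 2 + y.1 ^ 2 - y.2)
        √(δ ^ 2 + z.1 ^ 2 - z.2) := by
  have hy : exp (y.1 - δ) = exp (x.1 - δ) * exp ((y.1 - z.1) / 2) := by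
    rw [← exp_add]; congr 1; linarith
  have hz : exp (z.1 - δ) = exp (x.1 - δ) * exp (-((y.1 - z.1) / 2)) := by
    rw [← exp_add]; congr 1; linarith
  simp only [Bp_eq_mul_profile, hy, hz, midpointGap]
  ring

theorem midpointConcaveOn_Bp (hε : 0 ≤ ε) (hδ : δ ∈ Set.Ioo ε 1) (hg : 0 ≤ g δ ε) :
    MidpointConcaveOn (Omega ε) (Bp δ) := by
  intro y hy z hz hx
  wlog hyz : z.1 ≤ y.1 generalizing y z
  · rw [midpoint_comm] at hx ⊢
    rw [add_comm]
    exact this hz hy hx (le_of_not_ge hyz)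
  have hδ0 : 0 ≤ δ := hε.trans hδ.1.le
  have hσ_sq : √(δ ^ 2 - ε ^ 2) ^ 2 = δ ^ 2 - ε ^ 2 :=
    sq_sqrt (sub_nonneg.2 (pow_le_pow_left₀ hε hδ.1.le 2))
  have hr_sq : 2 * (ε / √2) ^ 2 = ε ^ 2 := by
    rw [div_pow, sq_sqrt zero_le_two, mul_div_cancel₀ _ two_ne_zero]
  have hδ_eq : √(√(δ ^ 2 - ε ^ 2) ^ 2 + 2 * (ε / √2) ^ 2) = δ := by
    rw [hσ_sq, hr_sq, sub_add_cancel, sqrt_sq hδ0]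
  have hσ_le {w : ℝ × ℝ} (hw : w ∈ Omega ε) : √(δ ^ 2 - ε ^ 2) ≤ √(δ ^ 2 + w.1 ^ 2 - w.2) :=
    sqrt_le_sqrt (by linarith [hw.2])
  have hs_sq {w : ℝ × ℝ} (hw : w ∈ Omega ε) :
      √(δ ^ 2 + w.1 ^ 2 - w.2) ^ 2 = δ ^ 2 + w.1 ^ 2 - w.2 :=
    sq_sqrt (by linarith [hw.2, hσ_sq.ge, sq_nonneg √(δ ^ 2 - ε ^ 2)])
  have hmid : midpoint ℝ y z = ((y.1 + z.1) / 2, (y.2 + z.2) / 2) := by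
    rw [midpoint_eq_smul_add, invOf_eq_inv]
    ext <;> simp only [Prod.smul_fst, Prod.smul_snd, Prod.fst_add, Prod.snd_add, smul_eq_mul] <;>
      ring
  rw [g_eq_midpointGap] at hg
  rw [← sub_nonneg, two_mul_Bp_sub_Bp_add_Bp (by rw [hmid]; ring)]
  refine mul_nonneg (div_nonneg (exp_pos _).le (sub_nonneg.2 hδ.2.le))
    (midpointGap_nonneg (σ := √(δ ^ 2 - ε ^ 2)) (r := ε / √2) (Real.sqrt_nonneg _) (by positivity)
      (by linarith) (hσ_le hx) (hσ_le hy) (Real.sqrt_nonneg _) ?_ ?_ (by rwa [hδ_eq]))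
  · rw [hs_sq hz, hσ_sq, hr_sq]
    linarith [hz.1]
  · rw [hs_sq hx, hs_sq hy, hs_sq hz, hmid]
    ring

end UpperBellmanFunction

section Averages

variable {f : ℝ → ℝ} {a b : ℝ}

lemma avg_eq_setAverage (hab : a ≤ b) : avg f a b = ⨍ t in Set.Icc a b, f t := by
  rw [avg, ← interval_average_eq_div, Set.uIoc_of_le hab, setAverage_congr Ioc_ae_eq_Icc]

lemma sq_avg_le_avg_sq (hab : a < b) (hf : IntervalIntegrable f volume a b)
    (hf2 : IntervalIntegrable (fun t ↦ f t ^ 2) volume a b) :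
    avg f a b ^ 2 ≤ avg (fun t ↦ f t ^ 2) a b := by
  rw [intervalIntegrable_iff_integrableOn_Icc_of_le hab.le] at hf hf2
  rw [avg_eq_setAverage hab.le, avg_eq_setAverage hab.le]
  exact even_two.convexOn_pow.map_set_average_le (continuous_pow 2).continuousOn isClosed_univ
    (by simpa using hab) (by simp) (by simp) hf hf2

lemma avg_add_avg_half (hab : IntervalIntegrable f volume a ((a + b) / 2))
    (hba : IntervalIntegrable f volume ((a + b) / 2) b) :
    avg f a ((a + b) / 2) + avg f ((a + b) / 2) b = 2 * avg f a b := by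
  have hleft : (a + b) / 2 - a = (b - a) / 2 := by ring
  have hright : b - (a + b) / 2 = (b - a) / 2 := by ring
  rw [avg, avg, avg, hleft, hright, ← add_div,
    intervalIntegral.integral_add_adjacent_intervals hab hba, div_div_eq_mul_div]
  ring

open Filter Topology in
lemma ae_tendsto_avg (hf : IntegrableOn f (Set.Icc a b)) :
    ∀ᵐ t, ∀ l r : ℕ → ℝ, (∀ n, l n < r n) → (∀ n, Set.Icc (l n) (r n) ⊆ Set.Icc a b) →
      (∀ n, t ∈ Set.Icc (l n) (r n)) → Tendsto (fun n ↦ r n - l n) atTop (𝓝 0) →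
      Tendsto (fun n ↦ avg f (l n) (r n)) atTop (𝓝 (f t)) := by
  have hloc : LocallyIntegrable ((Set.Icc a b).indicator f) :=
    (hf.integrable_indicator measurableSet_Icc).locallyIntegrable
  filter_upwards [IsUnifLocDoublingMeasure.ae_tendsto_average volume hloc 1] with
    t ht l r hlr hsub hmem hlen
  have hball (n : ℕ) :
      Metric.closedBall ((l n + r n) / 2) ((r n - l n) / 2) = Set.Icc (l n) (r n) :=
    (Icc_eq_closedBall (l n) (r n)).symm
  have hradius : Tendsto (fun n ↦ (r n - l n) / 2) atTop (𝓝[>] 0) := by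
    refine tendsto_nhdsWithin_iff.2 ⟨by simpa using hlen.div_const 2, .of_forall fun n ↦ ?_⟩
    exact half_pos (sub_pos.2 (hlr n))
  have hlim := ht (fun n ↦ (l n + r n) / 2) (fun n ↦ (r n - l n) / 2) hradius
    (.of_forall fun n ↦ by simpa only [one_mul, hball] using hmem n)
  rw [Set.indicator_of_mem (hsub 0 (hmem 0))] at hlim
  refine hlim.congr fun n ↦ ?_
  rw [hball, avg_eq_setAverage (hlr n).le]
  exact setAverage_congr_fun measurableSet_Icc
    (.of_forall fun x hx ↦ Set.indicator_of_mem (hsub n hx) f)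

end Averages

section DyadicAverages

/-- The average of `f` over the dyadic interval `[k / 2ⁿ, (k + 1) / 2ⁿ]`. -/
noncomputable def dyadicAvg (f : ℝ → ℝ) (n k : ℕ) : ℝ := avg f (k / 2 ^ n) ((k + 1) / 2 ^ n)

/-- The Bellman point of `φ` on the dyadic interval `[k / 2ⁿ, (k + 1) / 2ⁿ]`: the averages of `φ`
and of `φ²`. -/
noncomputable def dyadicPoint (φ : ℝ → ℝ) (n k : ℕ) : ℝ × ℝ :=
  (dyadicAvg φ n k, dyadicAvg (fun t ↦ φ t ^ 2) n k)

/-- The conditional expectation of `f` with respect to the dyadic intervals of length `2⁻ⁿ`, as a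
step function; it is meaningful on `[0, 1)`. -/
noncomputable def dyadicStep (f : ℝ → ℝ) (n : ℕ) (t : ℝ) : ℝ := dyadicAvg f n ⌊2 ^ n * t⌋₊

variable {f φ : ℝ → ℝ} {B : ℝ × ℝ → ℝ} {ε t : ℝ} {n k : ℕ}

lemma dyadic_left_lt_right (n k : ℕ) : (k : ℝ) / 2 ^ n < (k + 1) / 2 ^ n := by
  gcongr
  exact lt_add_one _

lemma Icc_dyadic_subset (hk : k < 2 ^ n) :
    Set.Icc ((k : ℝ) / 2 ^ n) ((k + 1) / 2 ^ n) ⊆ Set.Icc 0 1 := by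
  have hk' : (k : ℝ) + 1 ≤ 2 ^ n := by exact_mod_cast hk
  exact Set.Icc_subset_Icc (by positivity) (div_le_one_of_le₀ hk' (by positivity))

lemma intervalIntegrable_dyadic (hf : IntervalIntegrable f volume 0 1) (hk : k < 2 ^ n) :
    IntervalIntegrable f volume (k / 2 ^ n) ((k + 1) / 2 ^ n) := by
  refine hf.mono_set ?_
  rw [Set.uIcc_of_le (dyadic_left_lt_right n k).le, Set.uIcc_of_le zero_le_one]
  exact Icc_dyadic_subset hk

lemma dyadicAvg_zero_zero (f : ℝ → ℝ) : dyadicAvg f 0 0 = ∫ t in (0 : ℝ)..1, f t := by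
  simp [dyadicAvg, avg]

lemma dyadicAvg_succ (hf : IntervalIntegrable f volume 0 1) (hk : k < 2 ^ n) :
    dyadicAvg f (n + 1) (2 * k) + dyadicAvg f (n + 1) (2 * k + 1) = 2 * dyadicAvg f n k := by
  have hleft := intervalIntegrable_dyadic (n := n + 1) (k := 2 * k) hf (by grind)
  have hright := intervalIntegrable_dyadic (n := n + 1) (k := 2 * k + 1) hf (by grind)
  have hl : ((2 * k : ℕ) : ℝ) / 2 ^ (n + 1) = k / 2 ^ n := by
    push_cast; field_simp; ring
  have hm : (((2 * k : ℕ) : ℝ) + 1) / 2 ^ (n + 1) = ((k : ℝ) / 2 ^ n + (k + 1) / 2 ^ n) / 2 := by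
    push_cast; field_simp; ring
  have hm' : ((2 * k + 1 : ℕ) : ℝ) / 2 ^ (n + 1) = ((k : ℝ) / 2 ^ n + (k + 1) / 2 ^ n) / 2 := by
    push_cast; field_simp; ring
  have hr : (((2 * k + 1 : ℕ) : ℝ) + 1) / 2 ^ (n + 1) = (k + 1) / 2 ^ n := by
    push_cast; field_simp; ring
  simp only [dyadicAvg, hl, hm, hm', hr] at hleft hright ⊢
  exact avg_add_avg_half hleft hright

lemma dyadicPoint_mem_Omega (hφ : BMOd ε φ) (hk : k < 2 ^ n) : dyadicPoint φ n k ∈ Omega ε := by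
  obtain ⟨hint, hint_sq, hosc⟩ := hφ
  exact ⟨sq_avg_le_avg_sq (dyadic_left_lt_right n k) (intervalIntegrable_dyadic hint hk)
    (intervalIntegrable_dyadic hint_sq hk), sub_le_iff_le_add'.1 (hosc n k hk)⟩

lemma midpoint_dyadicPoint_succ (hφ : BMOd ε φ) (hk : k < 2 ^ n) :
    midpoint ℝ (dyadicPoint φ (n + 1) (2 * k)) (dyadicPoint φ (n + 1) (2 * k + 1)) =
      dyadicPoint φ n k := by
  obtain ⟨hint, hint_sq, -⟩ := hφ
  rw [midpoint_eq_smul_add, invOf_eq_inv, inv_smul_eq_iff₀ two_ne_zero]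
  exact Prod.ext (dyadicAvg_succ hint hk) (dyadicAvg_succ hint_sq hk)

lemma sum_range_two_mul {M : Type*} [AddCommMonoid M] (F : ℕ → M) (m : ℕ) :
    ∑ j ∈ Finset.range (2 * m), F j = ∑ k ∈ Finset.range m, (F (2 * k) + F (2 * k + 1)) := by
  induction m with
  | zero => simp
  | succ m ih =>
    rw [mul_add_one, Finset.sum_range_succ, Finset.sum_range_succ, ih, Finset.sum_range_succ,
      add_assoc]

lemma sum_dyadicPoint_le (hB : MidpointConcaveOn (Omega ε) B) (hφ : BMOd ε φ) (n : ℕ) :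
    ∑ k ∈ Finset.range (2 ^ n), B (dyadicPoint φ n k) ≤ 2 ^ n * B (dyadicPoint φ 0 0) := by
  induction n with
  | zero => simp
  | succ n ih =>
    have hparent {k : ℕ} (hk : k < 2 ^ n) :
        B (dyadicPoint φ (n + 1) (2 * k)) + B (dyadicPoint φ (n + 1) (2 * k + 1)) ≤
          2 * B (dyadicPoint φ n k) := by
      rw [← midpoint_dyadicPoint_succ hφ hk]
      refine hB (dyadicPoint_mem_Omega hφ (by grind)) (dyadicPoint_mem_Omega hφ (by grind)) ?_
      rw [midpoint_dyadicPoint_succ hφ hk]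
      exact dyadicPoint_mem_Omega hφ hk
    calc ∑ k ∈ Finset.range (2 ^ (n + 1)), B (dyadicPoint φ (n + 1) k)
        ≤ ∑ k ∈ Finset.range (2 ^ n), 2 * B (dyadicPoint φ n k) := by
          rw [pow_succ', sum_range_two_mul]
          exact Finset.sum_le_sum fun k hk ↦ hparent (Finset.mem_range.1 hk)
      _ ≤ 2 ^ (n + 1) * B (dyadicPoint φ 0 0) := by
          rw [← Finset.mul_sum, pow_succ', mul_assoc]
          gcongr

lemma measurable_dyadicStep (f : ℝ → ℝ) (n : ℕ) : Measurable (dyadicStep f n) :=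
  (measurable_from_nat (f := dyadicAvg f n)).comp
    (Nat.measurable_floor.comp (measurable_const_mul _))

open Filter Topology in
lemma ae_tendsto_dyadicStep (hf : IntervalIntegrable f volume 0 1) :
    ∀ᵐ t ∂volume.restrict (Set.Ico 0 1), Tendsto (fun n ↦ dyadicStep f n t) atTop (𝓝 (f t)) := by
  rw [intervalIntegrable_iff_integrableOn_Icc_of_le zero_le_one] at hf
  rw [ae_restrict_iff' measurableSet_Ico]
  filter_upwards [ae_tendsto_avg hf] with t ht ht_mem
  have hpos (n : ℕ) : (0 : ℝ) < 2 ^ n := by positivity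
  have ht_nonneg (n : ℕ) : 0 ≤ 2 ^ n * t := mul_nonneg (hpos n).le ht_mem.1
  refine ht _ _ (fun n ↦ dyadic_left_lt_right n _) (fun n ↦ Icc_dyadic_subset ?_) (fun n ↦ ?_) ?_
  · rw [Nat.floor_lt (ht_nonneg n)]
    push_cast
    exact mul_lt_of_lt_one_right (hpos n) ht_mem.2
  · exact ⟨(div_le_iff₀' (hpos n)).2 (Nat.floor_le (ht_nonneg n)),
      (le_div_iff₀' (hpos n)).2 (Nat.lt_floor_add_one _).le⟩
  · simpa only [← sub_div, add_sub_cancel_left, one_div_pow] using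
      tendsto_pow_atTop_nhds_zero_of_lt_one (r := (1 / 2 : ℝ)) (by norm_num) (by norm_num)

open scoped ENNReal in
lemma setLIntegral_comp_floor_mul {c : ℝ} (hc : 0 < c) (F : ℕ → ℝ≥0∞) (m : ℕ) :
    ∫⁻ t in Set.Ico 0 (m / c), F ⌊c * t⌋₊ =
      (∑ k ∈ Finset.range m, F k) * ENNReal.ofReal c⁻¹ := by
  induction m with
  | zero => simp
  | succ m ih =>
    have hlast : ∫⁻ t in Set.Ico (m / c) ((m + 1 : ℕ) / c), F ⌊c * t⌋₊ =
        F m * ENNReal.ofReal c⁻¹ := by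
      have hfloor : ∀ t ∈ Set.Ico (m / c) ((m + 1 : ℕ) / c), F ⌊c * t⌋₊ = F m := by
        rintro t ⟨hmt, htm⟩
        rw [div_le_iff₀' hc] at hmt
        rw [lt_div_iff₀' hc] at htm
        rw [(Nat.floor_eq_iff (m.cast_nonneg.trans hmt)).2 ⟨hmt, by exact_mod_cast htm⟩]
      rw [setLIntegral_congr_fun measurableSet_Ico hfloor, setLIntegral_const, Real.volume_Ico,
        ← sub_div, Nat.cast_succ, add_sub_cancel_left, one_div]
    have hle : (m : ℝ) / c ≤ (m + 1 : ℕ) / c := by gcongr; exact m.le_succ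
    rw [← Set.Ico_union_Ico_eq_Ico (by positivity) hle, lintegral_union measurableSet_Ico
      Set.Ico_disjoint_Ico_same, ih, hlast, Finset.sum_range_succ, add_mul]

end DyadicAverages

section BellmanInduction

variable {f φ : ℝ → ℝ} {B : ℝ × ℝ → ℝ} {ε : ℝ}

lemma lintegral_comp_dyadicStep_le (hB : MidpointConcaveOn (Omega ε) B) (hf : ∀ x, 0 ≤ f x)
    (hfB : ∀ x ∈ Omega ε, f x.1 ≤ B x) (hφ : BMOd ε φ) (n : ℕ) :
    ∫⁻ t in Set.Ico 0 1, ENNReal.ofReal (f (dyadicStep φ n t)) ≤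
      ENNReal.ofReal (B (dyadicPoint φ 0 0)) := by
  have hsum : ∑ k ∈ Finset.range (2 ^ n), f (dyadicAvg φ n k) ≤ 2 ^ n * B (dyadicPoint φ 0 0) :=
    (Finset.sum_le_sum fun k hk ↦ hfB _ (dyadicPoint_mem_Omega hφ (Finset.mem_range.1 hk))).trans
      (sum_dyadicPoint_le hB hφ n)
  have hfloor := setLIntegral_comp_floor_mul (c := 2 ^ n) (by positivity)
    (fun k ↦ ENNReal.ofReal (f (dyadicAvg φ n k))) (2 ^ n)
  rw [Nat.cast_pow, Nat.cast_ofNat, div_self (by positivity)] at hfloor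
  simp only [dyadicStep]
  rw [hfloor, ← ENNReal.ofReal_sum_of_nonneg fun k _ ↦ hf _,
    ← ENNReal.ofReal_mul (Finset.sum_nonneg fun k _ ↦ hf _)]
  refine ENNReal.ofReal_le_ofReal ?_
  rwa [← div_eq_mul_inv, div_le_iff₀' (by positivity)]

theorem intervalIntegrable_comp_and_integral_le (hB : MidpointConcaveOn (Omega ε) B)
    (hf : Continuous f) (hf0 : ∀ x, 0 ≤ f x) (hfB : ∀ x ∈ Omega ε, f x.1 ≤ B x)
    (hφ : BMOd ε φ) :
    IntervalIntegrable (fun t ↦ f (φ t)) volume 0 1 ∧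
      ∫ t in (0 : ℝ)..1, f (φ t) ≤ B (∫ t in (0 : ℝ)..1, φ t, ∫ t in (0 : ℝ)..1, φ t ^ 2) := by
  have hroot : dyadicPoint φ 0 0 = (∫ t in (0 : ℝ)..1, φ t, ∫ t in (0 : ℝ)..1, φ t ^ 2) := by
    simp only [dyadicPoint, dyadicAvg_zero_zero]
  rw [← hroot]
  have hB0 : 0 ≤ B (dyadicPoint φ 0 0) :=
    (hf0 _).trans (hfB _ (dyadicPoint_mem_Omega hφ (by simp)))
  have henorm (x : ℝ) : ‖f x‖ₑ = ENNReal.ofReal (f x) := Real.enorm_of_nonneg (hf0 x)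
  have hlim := (ae_tendsto_dyadicStep hφ.1).mono fun t ht ↦ (hf.tendsto (φ t)).comp ht
  have hmeas (n : ℕ) : Measurable fun t ↦ f (dyadicStep φ n t) :=
    hf.measurable.comp (measurable_dyadicStep φ n)
  have hliminf : Filter.liminf (fun n ↦ ∫⁻ t in Set.Ico 0 1, ‖f (dyadicStep φ n t)‖ₑ)
      Filter.atTop ≤ ENNReal.ofReal (B (dyadicPoint φ 0 0)) := by
    simp only [henorm]
    exact Filter.liminf_le_of_le (by isBoundedDefault) fun c hc ↦
      hc.exists.elim fun n hn ↦ hn.trans (lintegral_comp_dyadicStep_le hB hf0 hfB hφ n)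
  have hint : IntegrableOn (fun t ↦ f (φ t)) (Set.Ico 0 1) :=
    integrable_of_tendsto hlim (fun n ↦ (hmeas n).aestronglyMeasurable)
      (hliminf.trans_lt ENNReal.ofReal_lt_top).ne
  refine ⟨(intervalIntegrable_iff_integrableOn_Ico_of_le zero_le_one).2 hint, ?_⟩
  rw [intervalIntegral.integral_of_le zero_le_one, ← integral_Ico_eq_integral_Ioc,
    ← ENNReal.ofReal_le_ofReal_iff hB0,
    ofReal_integral_eq_lintegral_ofReal hint (.of_forall fun t ↦ hf0 _)]
  simp only [← henorm]
  exact (lintegral_enorm_le_liminf_of_tendsto hlim fun n ↦ (hmeas n).enorm.aemeasurable).trans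
    hliminf

end BellmanInduction

theorem stmt19_general {δ ε : ℝ} (hε : 0 ≤ ε) (hδ : δ ∈ Set.Ioo ε 1) (hg : 0 ≤ g δ ε)
    {φ : ℝ → ℝ} (hφ : BMOd ε φ) :
    IntervalIntegrable (fun t ↦ exp (φ t)) volume 0 1 ∧
      (∫ t in (0 : ℝ)..1, exp (φ t)) ≤
        Bp δ (∫ t in (0 : ℝ)..1, φ t, ∫ t in (0 : ℝ)..1, φ t ^ 2) :=
  intervalIntegrable_comp_and_integral_le (midpointConcaveOn_Bp hε hδ hg) Real.continuous_exp
    (fun x ↦ (exp_pos x).le) (fun _ hx ↦ exp_le_Bp (hε.trans hδ.1.le) hδ.2 hx.1) hφ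

/-- Upper Bellman estimate in the dyadic case: if `δ ∈ (ε,1)` solves
`g(δ,ε) = 0`, then for every `φ ∈ BMO^d_ε([0,1])` the integral of `e^φ` is at
most `B⁺_δ(∫φ, ∫φ²)`. -/
theorem stmt19 (ε δ : ℝ) (hε0 : 0 < ε) (hε1 : ε < Real.sqrt 2 * Real.log 2)
    (hδ : δ ∈ Set.Ioo ε 1) (hg : g δ ε = 0)
    (φ : ℝ → ℝ) (hφ : BMOd ε φ) :
    IntervalIntegrable (fun t => Real.exp (φ t)) volume 0 1 ∧
    (∫ t in (0:ℝ)..1, Real.exp (φ t)) ≤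
      Bp δ (∫ t in (0:ℝ)..1, φ t, ∫ t in (0:ℝ)..1, (φ t) ^ 2) :=
  stmt19_general hε0.le hδ hg.ge hφ
end
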